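/- arXiv:2102.04203 — 2 statements merged into one kernel-verified Lean document; each statement's English description precedes it below -/
import Mathlib

section
/- Let G be a finite graph (parallel edges allowed, no loops) and let T ⊆ V(G) be a set of terminal vertices such that every vertex in V(G)∖T has even degree. Then the maximal number of pairwise edge-disjoint T-paths in G equals (1/2)·Σ_{t∈T} λ_G(t, T−t), where λ_G(t, T−t) denotes the maximal number of pairwise edge-disjoint paths between t and T−t. -/
/-!
Common definitions: multigraphs (parallel edges allowed, no loops), walks,
paths, cuts, waves and related notions used in the statements below.
-/

universe u v

/-- A multigraph with vertex type `V` and edge type `E`: every edge is assigned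
an unordered pair of *distinct* end-vertices (parallel edges allowed, no loops). -/
structure Multigraph (V : Type u) (E : Type v) : Type (max u v) where
  inc : E → Sym2 V
  not_isDiag : ∀ e, ¬ (inc e).IsDiag

namespace Multigraph

variable {V : Type u} {E : Type v}

/-- Walks in a multigraph, recorded together with the edges they traverse. -/
inductive Walk (G : Multigraph V E) : V → V → Type (max u v)
  | nil (v : V) : Walk G v v
  | cons {u v w : V} (e : E) (he : G.inc e = s(u, v)) (p : Walk G v w) : Walk G u w

namespace Walk

variable {G : Multigraph V E}

/-- The list of vertices visited by a walk. -/
def support : ∀ {u w : V}, G.Walk u w → List V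
  | _, _, .nil v => [v]
  | u, _, .cons _ _ p => u :: p.support

/-- The list of edges traversed by a walk. -/
def edges : ∀ {u w : V}, G.Walk u w → List E
  | _, _, .nil _ => []
  | _, _, .cons e _ p => e :: p.edges

end Walk

/-- `δ_G(v)`: the set of edges incident with the vertex `v`. -/
def inci (G : Multigraph V E) (v : V) : Set E := {e | v ∈ G.inc e}

/-- `δ_G(X)`: the set of edges with exactly one end-vertex in `X`. -/
def cut (G : Multigraph V E) (X : Set V) : Set E :=
  {e | ∃ x y, G.inc e = s(x, y) ∧ x ∈ X ∧ y ∉ X}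

/-- Connectedness of a multigraph. -/
def Connected (G : Multigraph V E) : Prop := ∀ u v : V, Nonempty (G.Walk u v)

/-- A `T`-path: a path connecting two distinct vertices of `T`
with no internal vertex in `T`. -/
structure TPath (G : Multigraph V E) (T : Set V) : Type (max u v) where
  first : V
  last : V
  walk : G.Walk first last
  first_mem : first ∈ T
  last_mem : last ∈ T
  ne : first ≠ last
  support_nodup : walk.support.Nodup
  internal : ∀ x ∈ walk.support, x ∈ T → x = first ∨ x = last

/-- A system of pairwise edge-disjoint `T`-paths. -/
def TPathDisjoint (G : Multigraph V E) {T : Set V} (P : Set (G.TPath T)) : Prop :=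
  ∀ p ∈ P, ∀ q ∈ P, p ≠ q → ∀ e, e ∈ p.walk.edges → e ∉ q.walk.edges

/-- An `st`-path: a path from `s` to `t` (no internal vertex is `s` or `t`,
which is automatic as the vertices of a path are distinct). -/
structure STPath (G : Multigraph V E) (s t : V) : Type (max u v) where
  walk : G.Walk s t
  support_nodup : walk.support.Nodup

/-- A system of pairwise edge-disjoint `st`-paths. -/
def STPathDisjoint (G : Multigraph V E) {s t : V} (P : Set (G.STPath s t)) : Prop :=
  ∀ p ∈ P, ∀ q ∈ P, p ≠ q → ∀ e, e ∈ p.walk.edges → e ∉ q.walk.edges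

/-- A nontrivial path starting at `s`. -/
structure SPath (G : Multigraph V E) (s : V) : Type (max u v) where
  last : V
  walk : G.Walk s last
  support_nodup : walk.support.Nodup
  edges_ne_nil : walk.edges ≠ []

/-- A system of pairwise edge-disjoint paths starting at `s`. -/
def SPathDisjoint (G : Multigraph V E) {s : V} (W : Set (G.SPath s)) : Prop :=
  ∀ p ∈ W, ∀ q ∈ W, p ≠ q → ∀ e, e ∈ p.walk.edges → e ∉ q.walk.edges

/-- The set of last edges of a system of paths starting at `s`. -/
def lastEdges (G : Multigraph V E) {s : V} (W : Set (G.SPath s)) : Set E :=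
  {e | ∃ p ∈ W, p.walk.edges.getLast? = some e}

/-- `C` is a cut separating `A` from `B`. -/
def SepCut (G : Multigraph V E) (A B : Set V) (C : Set E) : Prop :=
  ∃ X : Set V, A ⊆ X ∧ (∀ b ∈ B, b ∉ X) ∧ C = G.cut X

/-- `C` is a `⊆`-minimal cut separating `A` from `B`. -/
def IsMinSepCut (G : Multigraph V E) (A B : Set V) (C : Set E) : Prop :=
  G.SepCut A B C ∧ ∀ D : Set E, G.SepCut A B D → D ⊆ C → D = C

/-- An `s`-`B`-wave: a system of pairwise edge-disjoint paths starting at `s`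
whose set of last edges is a `⊆`-minimal cut separating `s` from `B`. -/
def IsWave (G : Multigraph V E) (s : V) (B : Set V) (W : Set (G.SPath s)) : Prop :=
  G.SPathDisjoint W ∧ G.IsMinSepCut {s} B (G.lastEdges W)

/-- An Erdős–Menger `st`-cut: an `st`-cut which is orthogonal to some system of
pairwise edge-disjoint `st`-paths, i.e. it consists of exactly one edge chosen
from each path of the system. -/
def IsEMCut (G : Multigraph V E) (s t : V) (C : Set E) : Prop :=
  (∃ X : Set V, s ∈ X ∧ t ∉ X ∧ C = G.cut X) ∧
  ∃ P : Set (G.STPath s t), G.STPathDisjoint P ∧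
    (∀ p ∈ P, ∃! e, e ∈ C ∧ e ∈ p.walk.edges) ∧
    (∀ e ∈ C, ∃ p ∈ P, e ∈ p.walk.edges)

/-- The order `≼` on `st`-cuts: the `s`-side of `C` is contained in the
`s`-side of `D` (in a connected graph the `s`-side is unique). -/
def CutLE (G : Multigraph V E) (s t : V) (C D : Set E) : Prop :=
  ∃ X Y : Set V, s ∈ X ∧ t ∉ X ∧ C = G.cut X ∧ s ∈ Y ∧ t ∉ Y ∧ D = G.cut Y ∧ X ⊆ Y

/-- A cut of the form `C_W` for some `st`-wave `W`. -/
def IsWaveCut (G : Multigraph V E) (s t : V) (C : Set E) : Prop :=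
  ∃ W : Set (G.SPath s), G.IsWave s {t} W ∧ G.lastEdges W = C

/-- Deletion of a set of edges. -/
def deleteEdges (G : Multigraph V E) (F : Set E) : Multigraph V {e : E // e ∉ F} where
  inc e := G.inc e.1
  not_isDiag e := G.not_isDiag e.1

open Classical in
/-- Contraction of the vertex set `X` to the vertex `s` (edges inside `X` are
deleted, edges leaving `X` are redirected to `s`). -/
noncomputable def contract (G : Multigraph V E) (X : Set V) (s : V) :
    Multigraph V {e : E // ¬ (Sym2.map (fun v => if v ∈ X then s else v) (G.inc e)).IsDiag} where
  inc e := Sym2.map (fun v => if v ∈ X then s else v) (G.inc e.1)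
  not_isDiag e := e.2

/-- Reachability inside a set `S` of vertices. -/
def ReachableIn (G : Multigraph V E) (S : Set V) (x y : V) : Prop :=
  ∃ p : G.Walk x y, ∀ z ∈ p.support, z ∈ S

/-- `Y` is (the vertex set of) a connected component of the subgraph of `G`
induced by `S`. -/
def IsComponentOf (G : Multigraph V E) (Y S : Set V) : Prop :=
  Y.Nonempty ∧ Y ⊆ S ∧ ∀ x ∈ Y, ∀ y ∈ S, (G.ReachableIn S x y ↔ y ∈ Y)

/-- A cycle in a multigraph (a closed walk with distinct edges whose
vertices are distinct except that the first one equals the last one). -/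
structure Cycle (G : Multigraph V E) : Type (max u v) where
  base : V
  walk : G.Walk base base
  edges_ne_nil : walk.edges ≠ []
  edges_nodup : walk.edges.Nodup
  support_tail_nodup : walk.support.tail.Nodup

/-- A graph is Eulerian if its edge set can be partitioned into
edge sets of cycles. -/
def IsEulerian (G : Multigraph V E) : Prop :=
  ∃ C : Set G.Cycle,
    (∀ c ∈ C, ∀ d ∈ C, c ≠ d → ∀ e, e ∈ c.walk.edges → e ∉ d.walk.edges) ∧
    ∀ e : E, ∃ c ∈ C, e ∈ c.walk.edges

/-- A `T`-partition: a family `{A t : t ∈ T}` of pairwise disjoint vertex sets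
with `A t ∩ T = {t}`. -/
def IsTPartition (T : Set V) (A : V → Set V) : Prop :=
  (∀ t ∈ T, A t ∩ T = {t}) ∧
  ∀ t₁ ∈ T, ∀ t₂ ∈ T, t₁ ≠ t₂ → Disjoint (A t₁) (A t₂)

end Multigraph

/-!
Each path of a maximum system of edge-disjoint `T`-paths has two ends and, reversed if necessary,
counts towards the packing at each of them; this gives `≤`. A packing at `t` is no larger than a
minimum cut separating `t` from `T \ {t}`, so for `≥` it suffices to find a system `P` such that
the sizes `λ(t)` of these cuts add up to at most `2 |P|`.

As long as some edge joins `t ∈ T` to `v ∉ T`, it can be split off together with a second edge `vy`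
such that every `X` with `X ∩ T = {t'}` keeps at least `λ(t')` edges in its cut. By parity, only
tight sets separating `v` from both `t` and `y` obstruct this. Uncrossing shows that those
containing `t` have a largest member and those containing `v` a smallest one, and either of these
two sets rules out at most `d(v)/2 - 1` of the `d(v) - 1` candidates for the second edge.
In the end every edge meeting `T` has both ends in `T`, so twice the number of edges within `T` is
at least `∑ λ(t)`, and undoing the splittings turns these edges into edge-disjoint `T`-paths.
-/

namespace Multigraph

variable {V E : Type*}

/-! ### Cuts of edge families in which loops are allowed -/

section Cuts

variable {ends : E → Sym2 V} {X Y : Set V} {v : V}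

open Classical in
/-- The number (0 or 1) of times an edge with end pair `z` crosses the cut of `X`. -/
noncomputable def crossing (X : Set V) (z : Sym2 V) : ℕ :=
  if ∃ x y, z = s(x, y) ∧ x ∈ X ∧ y ∉ X then 1 else 0

open Classical in
lemma crossing_mk (X : Set V) (a b : V) :
    crossing X s(a, b) = if (a ∈ X ↔ b ∈ X) then 0 else 1 := by
  suffices h : (∃ x y, s(a, b) = s(x, y) ∧ x ∈ X ∧ y ∉ X) ↔ ¬(a ∈ X ↔ b ∈ X) by
    simp only [crossing, h, ite_not]
  refine ⟨?_, fun h ↦ ?_⟩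
  · rintro ⟨x, y, hxy, hx, hy⟩
    rcases Sym2.eq_iff.1 hxy with ⟨rfl, rfl⟩ | ⟨rfl, rfl⟩ <;> tauto
  · by_cases ha : a ∈ X
    · exact ⟨a, b, rfl, ha, by tauto⟩
    · exact ⟨b, a, Sym2.eq_swap, by tauto, ha⟩

lemma crossing_compl (X : Set V) (z : Sym2 V) : crossing Xᶜ z = crossing X z := by
  induction z with | _ a b =>
  by_cases a ∈ X <;> by_cases b ∈ X <;> simp [crossing_mk, *]

lemma crossing_union_add_inter_le (X Y : Set V) (z : Sym2 V) :
    crossing (X ∪ Y) z + crossing (X ∩ Y) z ≤ crossing X z + crossing Y z := by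
  induction z with | _ a b =>
  by_cases a ∈ X <;> by_cases b ∈ X <;> by_cases a ∈ Y <;> by_cases b ∈ Y <;>
    simp [crossing_mk, *]

lemma cut_singleton (G : Multigraph V E) (v : V) : G.cut {v} = G.inci v := by
  ext e
  constructor
  · rintro ⟨_, y, he, rfl, -⟩
    exact (he ▸ Sym2.mem_mk_left _ y : _ ∈ G.inc e)
  · rintro ⟨y, he⟩
    exact ⟨v, y, he, rfl, fun hy ↦ G.not_isDiag e (he ▸ Sym2.mk_isDiag_iff.2 (Eq.symm hy))⟩

variable [Fintype E]

/-- The number of edges crossing the cut of `X`, for a family of edges given by its end pairs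
`ends : E → Sym2 V`. Unlike in a `Multigraph`, loops are allowed, because splitting off
produces them. -/
noncomputable def cutSize (ends : E → Sym2 V) (X : Set V) : ℕ := ∑ e, crossing X (ends e)

open Classical in
lemma ncard_setOf_eq_sum (p : E → Prop) : {e | p e}.ncard = ∑ e, if p e then 1 else 0 := by
  rw [Set.ncard_eq_toFinset_card', Set.toFinset_ofPred, Finset.card_filter]

lemma ncard_cut (G : Multigraph V E) (X : Set V) : (G.cut X).ncard = cutSize G.inc X :=
  ncard_setOf_eq_sum _

lemma cutSize_compl (ends : E → Sym2 V) (X : Set V) : cutSize ends Xᶜ = cutSize ends X := by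
  simp only [cutSize, crossing_compl]

lemma cutSize_union_add_inter_le (ends : E → Sym2 V) (X Y : Set V) :
    cutSize ends (X ∪ Y) + cutSize ends (X ∩ Y) ≤ cutSize ends X + cutSize ends Y := by
  simp only [cutSize, ← Finset.sum_add_distrib]
  exact Finset.sum_le_sum fun e _ ↦ crossing_union_add_inter_le X Y (ends e)

lemma cutSize_sdiff_add_sdiff_lt {e : E} {u w : V} (he : ends e = s(u, w)) (hu : u ∈ X ∩ Y)
    (hw : w ∉ X ∪ Y) :
    cutSize ends (X \ Y) + cutSize ends (Y \ X) < cutSize ends X + cutSize ends Y := by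
  have hYX : Y \ X = (X ∪ Yᶜ)ᶜ := by rw [Set.compl_union, compl_compl, Set.inter_comm]; rfl
  rw [hYX, cutSize_compl, Set.sdiff_eq, ← cutSize_compl ends Y, add_comm]
  simp only [cutSize, ← Finset.sum_add_distrib]
  refine Finset.sum_lt_sum (fun f _ ↦ crossing_union_add_inter_le X Yᶜ (ends f))
    ⟨e, Finset.mem_univ e, ?_⟩
  rw [Set.mem_union, not_or] at hw
  simp [he, crossing_mk, hu.1, hu.2, hw.1, hw.2]

/-- The edges joining the vertex `v` to the set `X`. -/
def linkEdges (ends : E → Sym2 V) (v : V) (X : Set V) : Set E := {e | ∃ y ∈ X, ends e = s(v, y)}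

lemma cutSize_insert_add (ends : E → Sym2 V) (hv : v ∉ X) :
    cutSize ends (insert v X) + 2 * (linkEdges ends v X).ncard =
      cutSize ends X + cutSize ends {v} := by
  classical
  rw [linkEdges, ncard_setOf_eq_sum, Finset.mul_sum]
  simp only [cutSize, ← Finset.sum_add_distrib]
  refine Finset.sum_congr rfl fun e _ ↦ ?_
  induction ends e with | _ a b =>
  by_cases a = v <;> by_cases b = v <;> by_cases a ∈ X <;> by_cases b ∈ X <;>
    simp_all [crossing_mk]

lemma cutSize_singleton (ends : E → Sym2 V) (v : V) :
    cutSize ends {v} = (linkEdges ends v {v}ᶜ).ncard := by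
  have huniv : cutSize ends Set.univ = 0 := by
    refine Finset.sum_eq_zero fun e _ ↦ ?_
    induction ends e with | _ a b => simp [crossing_mk]
  have h := cutSize_insert_add ends (Set.notMem_compl_iff.2 (Set.mem_singleton v))
  rw [cutSize_compl, ← Set.union_singleton, Set.compl_union_self, huniv] at h
  omega

lemma cutSize_union_modEq (hY : Y.Finite) (heven : ∀ v ∈ Y, Even (cutSize ends {v})) :
    cutSize ends (X ∪ Y) ≡ cutSize ends X [MOD 2] := by
  induction Y, hY using Set.Finite.induction_on with
  | empty => rw [Set.union_empty]
  | @insert v Y _ _ ih =>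
    have hXY := ih fun w hw ↦ heven w (Set.mem_insert_of_mem v hw)
    rw [Set.union_insert]
    by_cases hv : v ∈ X ∪ Y
    · rwa [Set.insert_eq_of_mem hv]
    · obtain ⟨k, hk⟩ := heven v (Set.mem_insert v Y)
      have := cutSize_insert_add ends hv
      unfold Nat.ModEq at *
      omega

lemma cutSize_modEq_of_inter_eq [Finite V] {T : Set V} {t : V}
    (heven : ∀ v ∉ T, Even (cutSize ends {v})) (hX : X ∩ T = {t}) :
    cutSize ends X ≡ cutSize ends {t} [MOD 2] := by
  rw [← Set.inter_union_sdiff X T, hX]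
  exact cutSize_union_modEq (Set.toFinite _) fun v hv ↦ heven v hv.2

end Cuts

/-! ### Admissible demands and tight sets -/

section Demands

variable [Fintype E] {ends : E → Sym2 V} {T X Y : Set V} {lam : V → ℕ} {v x y t t₁ t₂ : V}

/-- All vertices outside `T` have even degree, and every set meeting `T` only in `t` has a cut of
size at least the demand `lam t`, and of the same parity. -/
structure IsAdmissible (ends : E → Sym2 V) (T : Set V) (lam : V → ℕ) : Prop where
  even_cutSize : ∀ v ∉ T, Even (cutSize ends {v})
  le_cutSize : ∀ t X, X ∩ T = {t} → lam t ≤ cutSize ends X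
  modEq_cutSize : ∀ t X, X ∩ T = {t} → lam t ≡ cutSize ends X [MOD 2]

/-- `X` is a tight set for `t`: it meets `T` only in `t`, and its cut has no more edges than
the demand `lam t` requires. -/
def IsTight (ends : E → Sym2 V) (T : Set V) (lam : V → ℕ) (t : V) (X : Set V) : Prop :=
  X ∩ T = {t} ∧ cutSize ends X = lam t

lemma mem_iff_eq_of_inter_eq (hX : X ∩ T = {t}) (hx : x ∈ T) : x ∈ X ↔ x = t := by
  rw [← Set.mem_singleton_iff, ← hX, Set.mem_inter_iff, and_iff_left hx]

lemma sdiff_inter_eq (hX : X ∩ T = {t₁}) (hY : Y ∩ T = {t₂}) (hne : t₁ ≠ t₂) :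
    (X \ Y) ∩ T = {t₁} := by
  have ht₁ : t₁ ∈ X ∩ T := hX ▸ Set.mem_singleton t₁
  rw [← Set.inter_sdiff_right_comm, hX]
  exact (Set.disjoint_singleton_left.2
    fun h ↦ hne ((mem_iff_eq_of_inter_eq hY ht₁.2).1 h)).sdiff_eq_left

lemma IsTight.union_inter (hadm : IsAdmissible ends T lam) (hX : IsTight ends T lam t X)
    (hY : IsTight ends T lam t Y) :
    IsTight ends T lam t (X ∪ Y) ∧ IsTight ends T lam t (X ∩ Y) := by
  have hunion : (X ∪ Y) ∩ T = {t} := by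
    rw [Set.union_inter_distrib_right, hX.1, hY.1, Set.union_self]
  have hinter : (X ∩ Y) ∩ T = {t} := by
    rw [Set.inter_inter_distrib_right, hX.1, hY.1, Set.inter_self]
  have := cutSize_union_add_inter_le ends X Y
  have := hadm.le_cutSize t _ hunion
  have := hadm.le_cutSize t _ hinter
  have := hX.2
  have := hY.2
  exact ⟨⟨hunion, by omega⟩, ⟨hinter, by omega⟩⟩

lemma IsTight.eq_of_edge (hadm : IsAdmissible ends T lam) {e : E} (he : ends e = s(x, v))
    (hX : IsTight ends T lam t₁ X) (hY : IsTight ends T lam t₂ Y) (hv : v ∈ X ∩ Y)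
    (hx : x ∉ X ∪ Y) : t₁ = t₂ := by
  by_contra hne
  have := cutSize_sdiff_add_sdiff_lt (he.trans Sym2.eq_swap) hv hx
  have := hadm.le_cutSize t₁ _ (sdiff_inter_eq hX.1 hY.1 hne)
  have := hadm.le_cutSize t₂ _ (sdiff_inter_eq hY.1 hX.1 (Ne.symm hne))
  have := hX.2
  have := hY.2
  omega

lemma IsTight.two_mul_ncard_linkEdges_le (hadm : IsAdmissible ends T lam)
    (hX : IsTight ends T lam t X) (hvT : v ∉ T) (hvX : v ∉ X) :
    2 * (linkEdges ends v X).ncard ≤ cutSize ends {v} := by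
  have := cutSize_insert_add ends hvX
  have := hadm.le_cutSize t (insert v X) (by rw [Set.insert_inter_of_notMem hvT, hX.1])
  have := hX.2
  omega

lemma IsTight.two_mul_ncard_linkEdges_compl_le (hadm : IsAdmissible ends T lam)
    (hX : IsTight ends T lam t X) (hvT : v ∉ T) (hvX : v ∈ X) :
    2 * (linkEdges ends v Xᶜ).ncard ≤ cutSize ends {v} := by
  have hcompl : insert v Xᶜ = (X \ {v})ᶜ := by
    rw [Set.sdiff_eq, Set.compl_inter, compl_compl, Set.union_singleton]
  have hinter : (X \ {v}) ∩ T = {t} := by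
    have hvt : v ∉ ({t} : Set V) := hX.1 ▸ fun h ↦ hvT h.2
    rw [← Set.inter_sdiff_right_comm, hX.1, Set.sdiff_singleton_eq_self hvt]
  have hinsert := cutSize_insert_add ends (Set.notMem_compl_iff.2 hvX)
  rw [hcompl, cutSize_compl, cutSize_compl] at hinsert
  have := hadm.le_cutSize t _ hinter
  have := hX.2
  omega

lemma IsAdmissible.supClosed_isTight (hadm : IsAdmissible ends T lam) (t v x : V) :
    SupClosed {S | v ∉ S ∧ x ∈ S ∧ IsTight ends T lam t S} := by
  rintro S ⟨hvS, hxS, hS⟩ S' ⟨hvS', -, hS'⟩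
  exact ⟨fun h ↦ h.elim hvS hvS', Or.inl hxS, (hS.union_inter hadm hS').1⟩

lemma IsAdmissible.supClosed_isTight_compl (hadm : IsAdmissible ends T lam) {e : E}
    (he : ends e = s(x, v)) :
    SupClosed {S | v ∉ S ∧ x ∈ S ∧ ∃ t, IsTight ends T lam t Sᶜ} := by
  rintro S ⟨hvS, hxS, t₁, hS⟩ S' ⟨hvS', hxS', t₂, hS'⟩
  obtain rfl : t₁ = t₂ :=
    hS.eq_of_edge hadm he hS' ⟨hvS, hvS'⟩ fun h ↦ h.elim (· hxS) (· hxS')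
  refine ⟨fun h ↦ h.elim hvS hvS', Or.inl hxS, t₁, ?_⟩
  rw [compl_sup]
  exact (hS.union_inter hadm hS').2

end Demands

/-! ### Splitting off a pair of edges -/

section Splitting

variable {ends ends' : E → Sym2 V} {T : Set V} {lam : V → ℕ} {e₁ e₂ : E} {v x y t : V}

open Classical in
/-- Splitting off edges `e₁ = xv` and `e₂ = vy` at `v`: the edge `e₁` now joins `x` to `y`, while
`e₂` is not deleted but turned into a loop at `v`, so that the edge set stays the same. -/
noncomputable def splitOff (ends : E → Sym2 V) (e₁ e₂ : E) (v x y : V) : E → Sym2 V :=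
  Function.update (Function.update ends e₁ s(x, y)) e₂ s(v, v)

/-- `ends'` arises from `ends` by splitting off one pair of adjacent edges. -/
def IsSplitting (ends ends' : E → Sym2 V) : Prop :=
  ∃ e₁ e₂ v x y, e₁ ≠ e₂ ∧ ends e₁ = s(x, v) ∧ ends e₂ = s(v, y) ∧
    ends' = splitOff ends e₁ e₂ v x y

lemma splitOff_left (hne : e₁ ≠ e₂) : splitOff ends e₁ e₂ v x y e₁ = s(x, y) := by
  classical rw [splitOff, Function.update_of_ne hne, Function.update_self]

lemma splitOff_right : splitOff ends e₁ e₂ v x y e₂ = s(v, v) :=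
  by classical exact Function.update_self ..

lemma splitOff_of_ne {e : E} (h₁ : e ≠ e₁) (h₂ : e ≠ e₂) :
    splitOff ends e₁ e₂ v x y e = ends e := by
  classical rw [splitOff, Function.update_of_ne h₂, Function.update_of_ne h₁]

lemma setOf_not_isDiag_splitOff_ssubset (hxv : x ≠ v) (hvy : v ≠ y)
    (h₁ : ends e₁ = s(x, v)) (h₂ : ends e₂ = s(v, y)) :
    {e | ¬ (splitOff ends e₁ e₂ v x y e).IsDiag} ⊂ {e | ¬ (ends e).IsDiag} := by
  refine (Set.ssubset_iff_of_subset fun e he ↦ ?_).2 ⟨e₂, by simpa [h₂] using hvy, ?_⟩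
  · by_cases he₂ : e = e₂
    · simpa [he₂, h₂] using hvy
    by_cases he₁ : e = e₁
    · simpa [he₁, h₁] using hxv
    rwa [Set.mem_ofPred_eq, splitOff_of_ne he₁ he₂] at he
  · simp [splitOff_right]

variable [Fintype E]

lemma cutSize_splitOff_add (hne : e₁ ≠ e₂) (h₁ : ends e₁ = s(x, v)) (h₂ : ends e₂ = s(v, y))
    (X : Set V) :
    cutSize (splitOff ends e₁ e₂ v x y) X + crossing X s(x, v) + crossing X s(v, y) =
      cutSize ends X + crossing X s(x, y) := by
  classical
  have hsum (φ : E → Sym2 V) : cutSize φ X = crossing X (φ e₁) + crossing X (φ e₂) +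
      ∑ e ∈ (Finset.univ.erase e₁).erase e₂, crossing X (φ e) := by
    have he₂ : e₂ ∈ Finset.univ.erase e₁ := Finset.mem_erase.2 ⟨hne.symm, Finset.mem_univ _⟩
    rw [cutSize, add_assoc, Finset.add_sum_erase _ (fun e ↦ crossing X (φ e)) he₂,
      Finset.add_sum_erase _ (fun e ↦ crossing X (φ e)) (Finset.mem_univ e₁)]
  have hrest : ∑ e ∈ (Finset.univ.erase e₁).erase e₂, crossing X (splitOff ends e₁ e₂ v x y e) =
      ∑ e ∈ (Finset.univ.erase e₁).erase e₂, crossing X (ends e) := by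
    refine Finset.sum_congr rfl fun e he ↦ ?_
    obtain ⟨he₂, he⟩ := Finset.mem_erase.1 he
    rw [splitOff_of_ne (Finset.ne_of_mem_erase he) he₂]
  have hloop : crossing X s(v, v) = 0 := by rw [crossing_mk, if_pos Iff.rfl]
  rw [hsum, hsum ends, hrest, splitOff_left hne, splitOff_right, h₁, h₂, hloop]
  omega

lemma cutSize_splitOff_modEq (hne : e₁ ≠ e₂) (h₁ : ends e₁ = s(x, v)) (h₂ : ends e₂ = s(v, y))
    (X : Set V) : cutSize (splitOff ends e₁ e₂ v x y) X ≡ cutSize ends X [MOD 2] := by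
  have h := cutSize_splitOff_add hne h₁ h₂ X
  simp only [crossing_mk] at h
  unfold Nat.ModEq
  split_ifs at h <;> first | omega | tauto

lemma cutSize_le_cutSize_splitOff_add_two (hne : e₁ ≠ e₂) (h₁ : ends e₁ = s(x, v))
    (h₂ : ends e₂ = s(v, y)) (X : Set V) :
    cutSize ends X ≤ cutSize (splitOff ends e₁ e₂ v x y) X + 2 := by
  have h := cutSize_splitOff_add hne h₁ h₂ X
  simp only [crossing_mk] at h
  split_ifs at h <;> omega

lemma cutSize_le_cutSize_splitOff (hne : e₁ ≠ e₂) (h₁ : ends e₁ = s(x, v))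
    (h₂ : ends e₂ = s(v, y)) {X : Set V} (hX : (x ∈ X ↔ y ∈ X) → (v ∈ X ↔ x ∈ X)) :
    cutSize ends X ≤ cutSize (splitOff ends e₁ e₂ v x y) X := by
  have h := cutSize_splitOff_add hne h₁ h₂ X
  simp only [crossing_mk] at h
  split_ifs at h <;> first | omega | tauto

lemma IsAdmissible.isAdmissible_splitOff (hadm : IsAdmissible ends T lam) (hne : e₁ ≠ e₂)
    (h₁ : ends e₁ = s(x, v)) (h₂ : ends e₂ = s(v, y))
    (hsafe : ∀ t X, IsTight ends T lam t X → (x ∈ X ↔ y ∈ X) → (v ∈ X ↔ x ∈ X)) :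
    IsAdmissible (splitOff ends e₁ e₂ v x y) T lam where
  even_cutSize w hw := by
    rw [Nat.even_iff, cutSize_splitOff_modEq hne h₁ h₂ {w}]
    exact Nat.even_iff.1 (hadm.even_cutSize w hw)
  modEq_cutSize t X hX :=
    (hadm.modEq_cutSize t X hX).trans (cutSize_splitOff_modEq hne h₁ h₂ X).symm
  le_cutSize t X hX := by
    have hle := hadm.le_cutSize t X hX
    by_cases htight : cutSize ends X = lam t
    · exact hle.trans (cutSize_le_cutSize_splitOff hne h₁ h₂ (hsafe t X ⟨hX, htight⟩))
    · have hmod : lam t ≡ cutSize ends X [MOD 2] := hadm.modEq_cutSize t X hX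
      have := cutSize_le_cutSize_splitOff_add_two hne h₁ h₂ X
      unfold Nat.ModEq at hmod
      omega

variable [Finite V]

lemma two_mul_ncard_linkEdges_sUnion_le {𝓢 : Set (Set V)} (he₁ : ends e₁ = s(x, v)) (hxv : x ≠ v)
    (heven : Even (cutSize ends {v})) (hsup : SupClosed 𝓢)
    (hmem : ∀ S ∈ 𝓢, x ∈ S ∧ 2 * (linkEdges ends v S).ncard ≤ cutSize ends {v}) :
    2 * (linkEdges ends v (⋃₀ 𝓢) \ {e₁}).ncard + 2 ≤ cutSize ends {v} := by
  rcases 𝓢.eq_empty_or_nonempty with rfl | hne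
  · have he₁v : e₁ ∈ linkEdges ends v {v}ᶜ := ⟨x, hxv, he₁.trans Sym2.eq_swap⟩
    have hpos : 0 < cutSize ends {v} := by
      rw [cutSize_singleton]
      exact (Set.ncard_pos (Set.toFinite _)).2 ⟨e₁, he₁v⟩
    obtain ⟨k, hk⟩ := heven
    have hlink : linkEdges ends v (⋃₀ ∅) = ∅ := by simp [linkEdges]
    rw [hlink, Set.empty_sdiff, Set.ncard_empty]
    omega
  · obtain ⟨hx, hle⟩ := hmem _ (hsup.sSup_mem_of_nonempty 𝓢.toFinite hne subset_rfl)
    have he₁' : e₁ ∈ linkEdges ends v (⋃₀ 𝓢) := ⟨x, hx, he₁.trans Sym2.eq_swap⟩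
    have := Set.ncard_sdiff_singleton_add_one he₁'
    rw [Set.sSup_eq_sUnion] at hle
    omega

-- Either family blocks at most `d/2 - 1` of the `d - 1` edges at `v` other than `e₁`.
lemma exists_edge_notMem_of_supClosed {𝓐 𝓑 : Set (Set V)} (he₁ : ends e₁ = s(x, v)) (hxv : x ≠ v)
    (heven : Even (cutSize ends {v})) (hsupA : SupClosed 𝓐) (hsupB : SupClosed 𝓑)
    (hA : ∀ S ∈ 𝓐, x ∈ S ∧ 2 * (linkEdges ends v S).ncard ≤ cutSize ends {v})
    (hB : ∀ S ∈ 𝓑, x ∈ S ∧ 2 * (linkEdges ends v S).ncard ≤ cutSize ends {v}) :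
    ∃ e₂ y, e₁ ≠ e₂ ∧ v ≠ y ∧ ends e₂ = s(v, y) ∧ (∀ S ∈ 𝓐, y ∉ S) ∧ ∀ S ∈ 𝓑, y ∉ S := by
  by_contra! hblocked
  have hcover : linkEdges ends v {v}ᶜ ⊆ insert e₁
      ((linkEdges ends v (⋃₀ 𝓐) \ {e₁}) ∪ (linkEdges ends v (⋃₀ 𝓑) \ {e₁})) := by
    rintro e ⟨y, hy, he⟩
    by_cases hne : e₁ = e
    · exact Or.inl hne.symm
    right
    by_cases hyA : y ∈ ⋃₀ 𝓐
    · exact Or.inl ⟨⟨y, hyA, he⟩, Ne.symm hne⟩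
    · obtain ⟨S, hS, hyS⟩ := hblocked e y hne (Ne.symm hy) he fun S hS hyS ↦ hyA ⟨S, hS, hyS⟩
      exact Or.inr ⟨⟨y, ⟨S, hS, hyS⟩, he⟩, Ne.symm hne⟩
  have hcard := Set.ncard_le_ncard hcover
  rw [← cutSize_singleton] at hcard
  have := Set.ncard_insert_le e₁
    ((linkEdges ends v (⋃₀ 𝓐) \ {e₁}) ∪ (linkEdges ends v (⋃₀ 𝓑) \ {e₁}))
  have := Set.ncard_union_le (linkEdges ends v (⋃₀ 𝓐) \ {e₁}) (linkEdges ends v (⋃₀ 𝓑) \ {e₁})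
  have := two_mul_ncard_linkEdges_sUnion_le he₁ hxv heven hsupA hA
  have := two_mul_ncard_linkEdges_sUnion_le he₁ hxv heven hsupB hB
  omega

lemma IsAdmissible.exists_safe_edge (hadm : IsAdmissible ends T lam) (ht : t ∈ T) (hv : v ∉ T)
    (he₁ : ends e₁ = s(t, v)) :
    ∃ e₂ y, e₁ ≠ e₂ ∧ v ≠ y ∧ ends e₂ = s(v, y) ∧
      ∀ t' X, IsTight ends T lam t' X → (t ∈ X ↔ y ∈ X) → (v ∈ X ↔ t ∈ X) := by
  -- A tight set obstructs splitting off `e₁` with `vy` if it separates `v` from `t` and `y`;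
  -- `𝓐` and `𝓑` collect the `t`-sides of the tight sets separating `v` from `t`.
  let 𝓐 : Set (Set V) := {S | v ∉ S ∧ t ∈ S ∧ IsTight ends T lam t S}
  let 𝓑 : Set (Set V) := {S | v ∉ S ∧ t ∈ S ∧ ∃ t', IsTight ends T lam t' Sᶜ}
  have hmemA : ∀ S ∈ 𝓐, t ∈ S ∧ 2 * (linkEdges ends v S).ncard ≤ cutSize ends {v} :=
    fun S ⟨hvS, htS, hS⟩ ↦ ⟨htS, hS.two_mul_ncard_linkEdges_le hadm hv hvS⟩
  have hmemB : ∀ S ∈ 𝓑, t ∈ S ∧ 2 * (linkEdges ends v S).ncard ≤ cutSize ends {v} :=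
    fun S ⟨hvS, htS, t', hS⟩ ↦
      ⟨htS, compl_compl S ▸ hS.two_mul_ncard_linkEdges_compl_le hadm hv hvS⟩
  obtain ⟨e₂, y, hne, hvy, he₂, hyA, hyB⟩ := exists_edge_notMem_of_supClosed he₁
    (fun h ↦ hv (h ▸ ht)) (hadm.even_cutSize v hv) (hadm.supClosed_isTight t v t)
    (hadm.supClosed_isTight_compl he₁) hmemA hmemB
  refine ⟨e₂, y, hne, hvy, he₂, fun t' X hX hty ↦ ?_⟩
  by_cases htX : t ∈ X
  · obtain rfl := (mem_iff_eq_of_inter_eq hX.1 ht).1 htX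
    refine iff_of_true (not_not.1 fun hvX ↦ ?_) htX
    exact hyA X ⟨hvX, htX, hX⟩ (hty.1 htX)
  · refine iff_of_false (fun hvX ↦ ?_) htX
    exact hyB Xᶜ ⟨not_not.2 hvX, htX, t', (compl_compl X).symm ▸ hX⟩ (mt hty.2 htX)

/-- No edge joins `T` to its complement. -/
def IsUnmixed (ends : E → Sym2 V) (T : Set V) : Prop :=
  ∀ e x y, ends e = s(x, y) → x ∈ T → y ∈ T

lemma IsAdmissible.exists_isUnmixed (hadm : IsAdmissible ends T lam) :
    ∃ ends', Relation.ReflTransGen IsSplitting ends ends' ∧ IsAdmissible ends' T lam ∧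
      IsUnmixed ends' T := by
  induction hn : {e | ¬ (ends e).IsDiag}.ncard using Nat.strong_induction_on generalizing ends with
  | _ n ih =>
  by_cases hunmixed : IsUnmixed ends T
  · exact ⟨ends, .refl, hadm, hunmixed⟩
  · unfold IsUnmixed at hunmixed
    push Not at hunmixed
    obtain ⟨e₁, t, v, h₁, ht, hv⟩ := hunmixed
    obtain ⟨e₂, y, hne, hvy, h₂, hsafe⟩ := hadm.exists_safe_edge ht hv h₁
    have hlt : {e | ¬ (splitOff ends e₁ e₂ v t y e).IsDiag}.ncard < n :=
      hn ▸ Set.ncard_lt_ncard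
        (setOf_not_isDiag_splitOff_ssubset (fun h ↦ hv (h ▸ ht)) hvy h₁ h₂)
    obtain ⟨ends', hsplit, hadm', hunmixed'⟩ :=
      ih _ hlt (hadm.isAdmissible_splitOff hne h₁ h₂ hsafe) rfl
    exact ⟨ends', hsplit.head ⟨e₁, e₂, v, t, y, hne, h₁, h₂, rfl⟩, hadm', hunmixed'⟩

/-- The edges joining two distinct vertices of `T`. -/
def terminalEdges (ends : E → Sym2 V) (T : Set V) : Set E :=
  {e | ∃ x ∈ T, ∃ y ∈ T, x ≠ y ∧ ends e = s(x, y)}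

lemma IsUnmixed.sum_cutSize_le (hunmixed : IsUnmixed ends T) :
    ∑ t ∈ (Set.toFinite T).toFinset, cutSize ends {t} ≤ 2 * (terminalEdges ends T).ncard := by
  classical
  simp only [terminalEdges, ncard_setOf_eq_sum, Finset.mul_sum, cutSize]
  rw [Finset.sum_comm]
  refine Finset.sum_le_sum fun e _ ↦ ?_
  split_ifs with hterm
  · obtain ⟨x, hx, y, hy, -, he⟩ := hterm
    calc ∑ t ∈ (Set.toFinite T).toFinset, crossing {t} (ends e)
        ≤ ∑ t ∈ (Set.toFinite T).toFinset, ((if x = t then 1 else 0) + if y = t then 1 else 0) := by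
          refine Finset.sum_le_sum fun t _ ↦ ?_
          rw [he, crossing_mk]
          by_cases x = t <;> by_cases y = t <;> simp [*]
      _ = 2 * 1 := by simp [Finset.sum_add_distrib, hx, hy]
  · refine (Finset.sum_eq_zero fun t ht ↦ if_neg ?_).le
    rintro ⟨x, y, he, rfl, hy⟩
    have hx := (Set.toFinite T).mem_toFinset.1 ht
    exact hterm ⟨x, hx, y, hunmixed e x y he hx, Ne.symm hy, he⟩

lemma IsAdmissible.sum_le_two_mul_ncard_terminalEdges (hadm : IsAdmissible ends T lam)
    (hunmixed : IsUnmixed ends T) :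
    ∑ t ∈ (Set.toFinite T).toFinset, lam t ≤ 2 * (terminalEdges ends T).ncard := by
  refine (Finset.sum_le_sum fun t ht ↦ hadm.le_cutSize t {t} ?_).trans hunmixed.sum_cutSize_le
  exact Set.inter_eq_left.2 (Set.singleton_subset_iff.2 ((Set.toFinite T).mem_toFinset.1 ht))

end Splitting

/-! ### Walks and systems of edge-disjoint `T`-paths -/

section Walks

variable {G : Multigraph V E} {T S X : Set V} {u v w x : V}

namespace Walk

/-- Concatenation of walks. -/
def append : ∀ {u v w : V}, G.Walk u v → G.Walk v w → G.Walk u w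
  | _, _, _, .nil _, q => q
  | _, _, _, .cons e he p, q => .cons e he (p.append q)

lemma support_eq_cons (p : G.Walk u w) : p.support = u :: p.support.tail := by
  cases p <;> rfl

lemma support_append (p : G.Walk u v) (q : G.Walk v w) :
    (p.append q).support = p.support ++ q.support.tail := by
  induction p with
  | nil => exact q.support_eq_cons
  | cons _ _ _ ih => exact congrArg _ (ih q)

lemma edges_append (p : G.Walk u v) (q : G.Walk v w) :
    (p.append q).edges = p.edges ++ q.edges := by
  induction p with
  | nil => rfl
  | cons _ _ _ ih => exact congrArg _ (ih q)

/-- The walk traversed backwards. -/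
def reverse : ∀ {u w : V}, G.Walk u w → G.Walk w u
  | _, _, .nil v => .nil v
  | _, _, .cons e he p => p.reverse.append (.cons e (he.trans Sym2.eq_swap) (.nil _))

lemma support_reverse (p : G.Walk u w) : p.reverse.support = p.support.reverse := by
  induction p with
  | nil => rfl
  | cons _ _ _ ih => simp only [reverse, support_append, ih, support, List.tail, List.reverse_cons]

lemma edges_reverse (p : G.Walk u w) : p.reverse.edges = p.edges.reverse := by
  induction p with
  | nil => rfl
  | cons _ _ _ ih => simp only [reverse, edges_append, ih, edges, List.reverse_cons]

lemma exists_suffix (p : G.Walk u w) (hx : x ∈ p.support) :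
    ∃ q : G.Walk x w, q.support <:+ p.support ∧ q.edges <:+ p.edges := by
  induction p with
  | nil v =>
    obtain rfl := List.mem_singleton.1 hx
    exact ⟨.nil x, List.suffix_rfl, List.suffix_rfl⟩
  | cons e he p ih =>
    rcases List.mem_cons.1 hx with rfl | hx
    · exact ⟨.cons e he p, List.suffix_rfl, List.suffix_rfl⟩
    · obtain ⟨q, hsupp, hedges⟩ := ih hx
      exact ⟨q, hsupp.trans (List.suffix_cons _ _), hedges.trans (List.suffix_cons _ _)⟩

lemma exists_nodup_first_mem (p : G.Walk u w) (hw : w ∈ S) :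
    ∃ t ∈ S, ∃ q : G.Walk u t, q.support.Nodup ∧ (∀ x ∈ q.support, x ∈ S → x = t) ∧
      q.edges ⊆ p.edges := by
  induction p with
  | nil v =>
    exact ⟨v, hw, .nil v, List.nodup_singleton v, fun x hx _ ↦ List.mem_singleton.1 hx,
      List.Subset.refl _⟩
  | @cons u v w e he p ih =>
    by_cases hu : u ∈ S
    · exact ⟨u, hu, .nil u, List.nodup_singleton u, fun x hx _ ↦ List.mem_singleton.1 hx,
        List.nil_subset _⟩
    obtain ⟨t, ht, q, hnodup, hfirst, hedges⟩ := ih hw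
    by_cases huq : u ∈ q.support
    · obtain ⟨r, hsupp, hr⟩ := q.exists_suffix huq
      exact ⟨t, ht, r, hnodup.sublist hsupp.sublist, fun x hx ↦ hfirst x (hsupp.subset hx),
        fun a ha ↦ List.mem_cons_of_mem e (hedges (hr.subset ha))⟩
    · refine ⟨t, ht, .cons e he q, List.nodup_cons.2 ⟨huq, hnodup⟩, fun x hx hxS ↦ ?_,
        List.cons_subset_cons e hedges⟩
      exact hfirst x ((List.mem_cons.1 hx).resolve_left fun h ↦ hu (h ▸ hxS)) hxS

lemma exists_tPath (p : G.Walk u w) (hu : u ∈ T) (hw : w ∈ T) (hne : u ≠ w) :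
    ∃ q : G.TPath T, q.walk.edges ⊆ p.edges := by
  obtain ⟨t, ⟨htT, htu⟩, q, hnodup, hfirst, hedges⟩ :=
    p.exists_nodup_first_mem (S := T \ {u}) ⟨hw, hne.symm⟩
  refine ⟨⟨u, t, q, hu, htT, Ne.symm htu, hnodup, fun x hx hxT ↦ ?_⟩, hedges⟩
  exact or_iff_not_imp_left.2 fun hxu ↦ hfirst x hx ⟨hxT, hxu⟩

lemma exists_mem_edges_mem_cut (p : G.Walk u w) (hu : u ∈ X) (hw : w ∉ X) :
    ∃ e ∈ p.edges, e ∈ G.cut X := by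
  induction p with
  | nil => exact absurd hu hw
  | @cons u v w e he p ih =>
    by_cases hv : v ∈ X
    · obtain ⟨a, ha, hcut⟩ := ih hv hw
      exact ⟨a, List.mem_cons_of_mem e ha, hcut⟩
    · exact ⟨e, List.mem_cons_self, u, v, he, hu, hv⟩

end Walk

namespace TPath

lemma exists_mem_edges (p : G.TPath T) : ∃ e, e ∈ p.walk.edges := by
  obtain ⟨e, he, -⟩ := p.walk.exists_mem_edges_mem_cut (Set.mem_singleton p.first) p.ne.symm
  exact ⟨e, he⟩

/-- The `T`-path traversed backwards. -/
def reverse (p : G.TPath T) : G.TPath T where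
  first := p.last
  last := p.first
  walk := p.walk.reverse
  first_mem := p.last_mem
  last_mem := p.first_mem
  ne := p.ne.symm
  support_nodup := by
    rw [Walk.support_reverse]
    exact List.nodup_reverse.2 p.support_nodup
  internal x hx hxT := by
    rw [Walk.support_reverse, List.mem_reverse] at hx
    exact (p.internal x hx hxT).symm

lemma exists_first_eq {t : V} {p : G.TPath T} (h : p.first = t ∨ p.last = t) :
    ∃ q : G.TPath T, q.first = t ∧ q.walk.edges ⊆ p.walk.edges := by
  rcases h with h | h
  · exact ⟨p, h, List.Subset.refl _⟩
  · refine ⟨p.reverse, h, fun e he ↦ List.mem_reverse.1 ?_⟩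
    rwa [← Walk.edges_reverse]

end TPath

lemma tPathDisjoint_range {ι : Type*} {q : ι → G.TPath T}
    (hq : ∀ i j, i ≠ j → ∀ e ∈ (q i).walk.edges, e ∉ (q j).walk.edges) :
    G.TPathDisjoint (Set.range q) ∧ (Set.range q).ncard = Nat.card ι := by
  constructor
  · rintro _ ⟨i, rfl⟩ _ ⟨j, rfl⟩ hne
    exact hq i j fun h ↦ hne (congrArg q h)
  · refine Set.ncard_range_of_injective fun i j hij ↦ ?_
    by_contra hne
    obtain ⟨e, he⟩ := (q i).exists_mem_edges
    exact hq i j hne e he (hij ▸ he)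

variable {P : Set (G.TPath T)}

lemma TPathDisjoint.encard_le (hP : G.TPathDisjoint P) {C : Set E}
    (hC : ∀ p ∈ P, ∃ e ∈ p.walk.edges, e ∈ C) : P.encard ≤ C.encard := by
  choose f hf hfC using hC
  refine Function.Embedding.encard_le
    ⟨fun p ↦ ⟨f p.1 p.2, hfC p.1 p.2⟩, fun p q hpq ↦ Subtype.ext ?_⟩
  by_contra hne
  have hpq : f p.1 p.2 = f q.1 q.2 := congrArg Subtype.val hpq
  exact hP p.1 p.2 q.1 q.2 hne _ (hf p.1 p.2) (hpq ▸ hf q.1 q.2)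

variable [Finite E]

lemma TPathDisjoint.ncard_le (hP : G.TPathDisjoint P) {C : Set E}
    (hC : ∀ p ∈ P, ∃ e ∈ p.walk.edges, e ∈ C) : P.ncard ≤ C.ncard :=
  ENat.toNat_le_toNat (hP.encard_le hC) (Set.encard_ne_top_iff.2 C.toFinite)

lemma TPathDisjoint.finite (hP : G.TPathDisjoint P) : P.Finite :=
  Set.encard_ne_top_iff.1 <| ne_top_of_le_ne_top (Set.encard_ne_top_iff.2 Set.univ.toFinite) <|
    hP.encard_le fun p _ ↦ p.exists_mem_edges.imp fun _ he ↦ ⟨he, Set.mem_univ _⟩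

lemma bddAbove_ncard_tPathDisjoint (G : Multigraph V E) (T : Set V) :
    BddAbove {n : ℕ | ∃ P : Set (G.TPath T), G.TPathDisjoint P ∧ P.ncard = n} := by
  refine ⟨(Set.univ : Set E).ncard, ?_⟩
  rintro _ ⟨P, hP, rfl⟩
  exact hP.ncard_le fun p _ ↦ p.exists_mem_edges.imp fun _ he ↦ ⟨he, Set.mem_univ _⟩

lemma exists_tPathDisjoint_ncard_eq_sSup (G : Multigraph V E) (T : Set V) :
    ∃ P : Set (G.TPath T), G.TPathDisjoint P ∧
      P.ncard = sSup {n : ℕ | ∃ P : Set (G.TPath T), G.TPathDisjoint P ∧ P.ncard = n} :=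
  Nat.sSup_mem (s := {n : ℕ | ∃ P : Set (G.TPath T), G.TPathDisjoint P ∧ P.ncard = n})
    ⟨0, ∅, fun _ h ↦ h.elim, Set.ncard_empty _⟩ (G.bddAbove_ncard_tPathDisjoint T)

lemma TPathDisjoint.ncard_setOf_first_or_last_le (hP : G.TPathDisjoint P) (t : V) :
    {p ∈ P | p.first = t ∨ p.last = t}.ncard ≤
      sSup {n : ℕ | ∃ P : Set (G.TPath T), G.TPathDisjoint P ∧
        (∀ p ∈ P, p.first = t) ∧ P.ncard = n} := by
  choose q hfirst hedges using fun p : {p ∈ P | p.first = t ∨ p.last = t} ↦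
    TPath.exists_first_eq p.2.2
  obtain ⟨hdisj, hcard⟩ := tPathDisjoint_range (q := q) fun i j hij e hi hj ↦
    hP i i.2.1 j j.2.1 (Subtype.coe_ne_coe.2 hij) e (hedges i hi) (hedges j hj)
  refine le_csSup ((G.bddAbove_ncard_tPathDisjoint T).mono ?_)
    ⟨Set.range q, hdisj, Set.forall_mem_range.2 hfirst, hcard⟩
  exact fun n ⟨Q, hQ, _, hn⟩ ↦ ⟨Q, hQ, hn⟩

lemma TPathDisjoint.two_mul_ncard_eq_sum [Finite V] (hP : G.TPathDisjoint P) :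
    2 * P.ncard = ∑ t ∈ (Set.toFinite T).toFinset,
      {p ∈ P | p.first = t ∨ p.last = t}.ncard := by
  classical
  have hleft (t : V) : {p ∈ P | p.first = t ∨ p.last = t}.ncard =
      (hP.finite.toFinset.filter fun p ↦ p.first = t ∨ p.last = t).card := by
    rw [← Set.ncard_coe_finset, Finset.coe_filter]
    simp only [Set.Finite.mem_toFinset]
  have hright (p : G.TPath T) :
      ((Set.toFinite T).toFinset.filter fun t ↦ p.first = t ∨ p.last = t).card = 2 := by
    rw [← Finset.card_pair p.ne]
    congr 1
    ext t
    have := p.first_mem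
    have := p.last_mem
    simp only [Finset.mem_filter, Set.Finite.mem_toFinset, Finset.mem_insert,
      Finset.mem_singleton]
    constructor
    · tauto
    · rintro (rfl | rfl) <;> tauto
  have hcount := Finset.sum_card_bipartiteAbove_eq_sum_card_bipartiteBelow
    (s := hP.finite.toFinset) (t := (Set.toFinite T).toFinset)
    fun p t ↦ p.first = t ∨ p.last = t
  simp only [Finset.bipartiteAbove, Finset.bipartiteBelow, hright, Finset.sum_const,
    ← Set.ncard_eq_toFinset_card P hP.finite, smul_eq_mul] at hcount
  rw [mul_comm, hcount]
  exact Finset.sum_congr rfl fun t _ ↦ (hleft t).symm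

end Walks

/-! ### Undoing the splittings -/

section Realization

variable {G : Multigraph V E} {T : Set V} {ends ends' : E → Sym2 V} {f : E → E}

/-- The edges in `ends` are merged from walks of `G`: the ends of `e` are joined by a walk all of
whose edges carry the label `e` under `f`. Walks of different edges are thus edge-disjoint. -/
def IsRealizedBy (G : Multigraph V E) (ends : E → Sym2 V) (f : E → E) : Prop :=
  ∀ e x y, ends e = s(x, y) → ∃ p : G.Walk x y, ∀ a ∈ p.edges, f a = e

lemma isRealizedBy_id (G : Multigraph V E) : G.IsRealizedBy G.inc id :=
  fun e _ y he ↦ ⟨.cons e he (.nil y), fun _ ha ↦ List.mem_singleton.1 ha⟩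

lemma IsRealizedBy.exists_of_isSplitting (hf : G.IsRealizedBy ends f)
    (h : IsSplitting ends ends') : ∃ f', G.IsRealizedBy ends' f' := by
  classical
  obtain ⟨e₁, e₂, v, x, y, hne, h₁, h₂, rfl⟩ := h
  let f' (a : E) : E := if f a = e₂ then e₁ else f a
  have hf'₁ {a : E} (ha : f a = e₁ ∨ f a = e₂) : f' a = e₁ := by grind
  refine ⟨f', fun e x' y' he ↦ ?_⟩
  by_cases he₂ : e = e₂
  · subst he₂
    obtain ⟨rfl, rfl⟩ : v = x' ∧ v = y' := by
      rcases Sym2.eq_iff.1 (splitOff_right.symm.trans he) with h | h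
      exacts [h, h.symm]
    exact ⟨.nil v, fun a ha ↦ absurd ha List.not_mem_nil⟩
  by_cases he₁ : e = e₁
  · subst he₁
    rw [splitOff_left hne] at he
    rcases Sym2.eq_iff.1 he with ⟨rfl, rfl⟩ | ⟨rfl, rfl⟩
    · obtain ⟨p, hp⟩ := hf _ _ _ h₁
      obtain ⟨q, hq⟩ := hf _ _ _ h₂
      refine ⟨p.append q, fun a ha ↦ hf'₁ ?_⟩
      rw [Walk.edges_append, List.mem_append] at ha
      exact ha.imp (hp a) (hq a)
    · obtain ⟨p, hp⟩ := hf _ _ _ (h₁.trans Sym2.eq_swap)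
      obtain ⟨q, hq⟩ := hf _ _ _ (h₂.trans Sym2.eq_swap)
      refine ⟨q.append p, fun a ha ↦ hf'₁ ?_⟩
      rw [Walk.edges_append, List.mem_append] at ha
      exact ha.symm.imp (hp a) (hq a)
  · rw [splitOff_of_ne he₁ he₂] at he
    obtain ⟨p, hp⟩ := hf e x' y' he
    exact ⟨p, fun a ha ↦ (if_neg fun h ↦ he₂ ((hp a ha).symm.trans h)).trans (hp a ha)⟩

lemma exists_isRealizedBy (h : Relation.ReflTransGen IsSplitting G.inc ends) :
    ∃ f, G.IsRealizedBy ends f := by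
  induction h with
  | refl => exact ⟨id, G.isRealizedBy_id⟩
  | tail _ hstep ih =>
    obtain ⟨f, hf⟩ := ih
    exact hf.exists_of_isSplitting hstep

lemma IsRealizedBy.exists_tPathDisjoint (hf : G.IsRealizedBy ends f) :
    ∃ P : Set (G.TPath T), G.TPathDisjoint P ∧ P.ncard = (terminalEdges ends T).ncard := by
  have hpath (e : terminalEdges ends T) : ∃ q : G.TPath T, ∀ a ∈ q.walk.edges, f a = e := by
    obtain ⟨x, hx, y, hy, hxy, he⟩ := e.2
    obtain ⟨p, hp⟩ := hf e x y he
    obtain ⟨q, hq⟩ := p.exists_tPath hx hy hxy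
    exact ⟨q, fun a ha ↦ hp a (hq ha)⟩
  choose q hq using hpath
  exact ⟨Set.range q, tPathDisjoint_range fun i j hij a hi hj ↦
    hij (Subtype.ext ((hq i a hi).symm.trans (hq j a hj)))⟩

end Realization

/-! ### Minimum cuts around the terminals -/

section MinCut

variable [Fintype E] {ends : E → Sym2 V} {T X : Set V} {t : V}

/-- The size of a minimum cut separating `t` from `T \ {t}`. -/
noncomputable def minCut (ends : E → Sym2 V) (T : Set V) (t : V) : ℕ :=
  sInf {n | ∃ X, X ∩ T = {t} ∧ cutSize ends X = n}

lemma minCut_le (hX : X ∩ T = {t}) : minCut ends T t ≤ cutSize ends X :=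
  Nat.sInf_le ⟨X, hX, rfl⟩

lemma exists_cutSize_eq_minCut (ends : E → Sym2 V) (ht : t ∈ T) :
    ∃ X, X ∩ T = {t} ∧ cutSize ends X = minCut ends T t :=
  Nat.sInf_mem (s := {n | ∃ X, X ∩ T = {t} ∧ cutSize ends X = n})
    ⟨_, {t}, Set.inter_eq_left.2 (Set.singleton_subset_iff.2 ht), rfl⟩

lemma isAdmissible_minCut [Finite V] (heven : ∀ v ∉ T, Even (cutSize ends {v})) :
    IsAdmissible ends T (minCut ends T) where
  even_cutSize := heven
  le_cutSize _ _ hX := minCut_le hX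
  modEq_cutSize t X hX := by
    have ht : t ∈ X ∩ T := hX ▸ Set.mem_singleton t
    obtain ⟨Y, hY, hcut⟩ := exists_cutSize_eq_minCut ends ht.2
    rw [← hcut]
    exact (cutSize_modEq_of_inter_eq heven hY).trans (cutSize_modEq_of_inter_eq heven hX).symm

lemma sSup_ncard_first_eq_le_minCut (G : Multigraph V E) (ht : t ∈ T) :
    sSup {n : ℕ | ∃ P : Set (G.TPath T), G.TPathDisjoint P ∧
      (∀ p ∈ P, p.first = t) ∧ P.ncard = n} ≤ minCut G.inc T t := by
  obtain ⟨X, hX, hcut⟩ := exists_cutSize_eq_minCut G.inc ht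
  refine csSup_le' ?_
  rintro _ ⟨P, hP, hfirst, rfl⟩
  rw [← hcut, ← ncard_cut]
  refine hP.ncard_le fun p hp ↦ p.walk.exists_mem_edges_mem_cut ?_ fun hlast ↦ p.ne ?_
  · exact (mem_iff_eq_of_inter_eq hX p.first_mem).2 (hfirst p hp)
  · rw [hfirst p hp, (mem_iff_eq_of_inter_eq hX p.last_mem).1 hlast]

lemma exists_tPathDisjoint_sum_minCut_le [Finite V] (G : Multigraph V E)
    (heven : ∀ v ∉ T, Even (G.inci v).ncard) :
    ∃ P : Set (G.TPath T), G.TPathDisjoint P ∧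
      ∑ t ∈ (Set.toFinite T).toFinset, minCut G.inc T t ≤ 2 * P.ncard := by
  simp only [← cut_singleton, ncard_cut] at heven
  obtain ⟨ends, hsplit, hadm, hunmixed⟩ := (isAdmissible_minCut heven).exists_isUnmixed
  obtain ⟨f, hf⟩ := exists_isRealizedBy hsplit
  obtain ⟨P, hP, hcard⟩ := hf.exists_tPathDisjoint (T := T)
  exact ⟨P, hP, hcard ▸ hadm.sum_le_two_mul_ncard_terminalEdges hunmixed⟩

end MinCut

end Multigraph

/-- **Lovász–Cherkassky theorem.** If `G` is a finite graph and every vertex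
outside `T` has even degree, then twice the maximal number of pairwise
edge-disjoint `T`-paths equals `∑ t ∈ T, λ(t, T−t)`, where `λ(t, T−t)` is the
maximal number of pairwise edge-disjoint paths between `t` and `T−t`
(equivalently, `T`-paths with first vertex `t`). -/
theorem lovasz_cherkassky {V E : Type} [Fintype V] [Fintype E]
    (G : Multigraph V E) (T : Set V)
    (hEven : ∀ v : V, v ∉ T → Even (G.inci v).ncard) :
    2 * sSup {n : ℕ | ∃ P : Set (G.TPath T), G.TPathDisjoint P ∧ P.ncard = n} =
      ∑ t ∈ (Set.toFinite T).toFinset,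
        sSup {n : ℕ | ∃ P : Set (G.TPath T), G.TPathDisjoint P ∧
          (∀ p ∈ P, p.first = t) ∧ P.ncard = n} := by
  refine le_antisymm ?_ ?_
  · obtain ⟨P, hP, hmax⟩ := G.exists_tPathDisjoint_ncard_eq_sSup T
    rw [← hmax, hP.two_mul_ncard_eq_sum]
    exact Finset.sum_le_sum fun t _ ↦ hP.ncard_setOf_first_or_last_le t
  · obtain ⟨P, hP, hsum⟩ := G.exists_tPathDisjoint_sum_minCut_le hEven
    refine (Finset.sum_le_sum fun t ht ↦ ?_).trans <| hsum.trans <|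
      Nat.mul_le_mul_left 2 (le_csSup (G.bddAbove_ncard_tPathDisjoint T) ⟨P, hP, rfl⟩)
    exact G.sSup_ncard_first_eq_le_minCut ((Set.toFinite T).mem_toFinset.1 ht)
end

section
/- A (possibly infinite) graph G is Eulerian, i.e. its edge set can be partitioned into edge sets of cycles, if and only if G contains no cut of odd size (infinite cardinals are considered neither odd nor even). -/
/-!
Common definitions: multigraphs (parallel edges allowed, no loops), walks,
paths, cuts, waves and related notions used in the statements below.
-/

universe u v

/-!
A closed walk crosses every cut an even number of times, so each finite cut of an Eulerian graph is
even. For the converse, let `S` be a set of edges all of whose finite cuts are even. No edge of `S`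
is a bridge of `S`, so each edge lies on a cycle, and removing a cycle keeps finite cuts even; this
decomposes a countable `S` greedily.

For uncountable `S`, exhaust `S` by a well-ordered chain of closed sets `A i` with
`#(A i) ≤ max ℵ₀ #(Iio i)`, put `U i := ⋃ k < i, A k`, and apply induction on the cardinality to the
layers `S ∩ (A i \ U i)`. Their finite cuts are even for two reasons.

* Take a minimum set of edges separating vertices `x` and `y` of `U i` in `S`. Either it has at most
  `max ℵ₀ #(Iio i)` elements and closedness puts it inside `U i`, or it is larger than `U i`
  together with any finite set. So if `S \ U i` connects `x` to `y`, then it does so even after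
  the deletion of finitely many edges. A finite cut of `S \ U i` therefore leaves all vertices that
  `U i` has in a component of `S \ U i` on one side, and moving these components turns it into a
  cut of `S` disjoint from `U i`.
* A Löwenheim–Skolem type closure of `A i` makes the layer connect two of its vertices, off a given
  finite set, whenever `S \ U i` does. Hence every finite cut of the layer is a cut of `S \ U i`.
-/

section Cardinality

open Cardinal Set

universe w

theorem mk_iUnion_le_of_aleph0_le {α : Type v} {ι : Type w} {A : ι → Set α} {μ : Cardinal.{v}}
    (hμ : ℵ₀ ≤ μ) (hι : lift.{v} #ι ≤ lift.{w} μ) (hA : ∀ i, #(A i) ≤ μ) :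
    #(⋃ i, A i) ≤ μ := by
  rw [← lift_le.{w}]
  calc
    lift.{w} #(⋃ i, A i) ≤ lift.{v} #ι * ⨆ i, lift.{w} #(A i) := mk_iUnion_le_lift A
    _ ≤ lift.{w} μ * lift.{w} μ := mul_le_mul' hι (ciSup_le' fun i => lift_le.2 (hA i))
    _ = lift.{w} μ := mul_eq_self (aleph0_le_lift.2 hμ)

theorem mk_finset_le_max (α : Type v) : #(Finset α) ≤ max ℵ₀ #α := by
  rcases finite_or_infinite α with _ | _
  · exact (mk_le_aleph0 (α := Finset α)).trans (le_max_left _ _)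
  · exact (mk_finset_of_infinite α).trans_le (le_max_right _ _)

theorem exists_superset_closed_mk_le {α : Type v} (φ : Finset α → Set α)
    (hφ : ∀ F, (φ F).Countable) (S : Set α) :
    ∃ T, S ⊆ T ∧ (∀ F : Finset α, (F : Set α) ⊆ T → φ F ⊆ T) ∧ #T ≤ max ℵ₀ #S := by
  classical
  let next : Set α → Set α := fun W => W ∪ ⋃ F : Finset W, φ (F.image (↑))
  have hmono : Monotone fun n => next^[n] S := fun _ _ h =>
    Function.monotone_iterate_of_id_le (fun _ => subset_union_left) h S
  have hcard : ∀ n, #(next^[n] S) ≤ max ℵ₀ #S := by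
    intro n
    induction n with
    | zero => exact le_max_right _ _
    | succ n ih =>
      rw [Function.iterate_succ_apply']
      refine (mk_union_le _ _).trans (add_le_of_le (le_max_left _ _) ih ?_)
      refine mk_iUnion_le_of_aleph0_le (le_max_left _ _) ?_ fun F => ?_
      · exact lift_le.2 ((mk_finset_le_max _).trans (max_le (le_max_left _ _) ih))
      · exact (le_aleph0_iff_set_countable.2 (hφ _)).trans (le_max_left _ _)
  refine ⟨⋃ n, next^[n] S, subset_iUnion (fun n => next^[n] S) 0, fun F hF => ?_,
    mk_iUnion_le_of_aleph0_le (le_max_left _ _) (by simp) hcard⟩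
  obtain ⟨n, hn⟩ := hmono.directed_le.exists_mem_subset_of_finset_subset_biUnion hF
  have hstep : φ F ⊆ next^[n + 1] S := by
    rw [Function.iterate_succ_apply']
    lift F to Finset (next^[n] S) using hn
    exact subset_union_of_subset_right (subset_iUnion (fun F : Finset _ => φ (F.image (↑))) F) _
  exact hstep.trans (subset_iUnion (fun n => next^[n] S) (n + 1))

theorem pairwise_disjoint_sdiff_biUnion_Iio {α ι : Type*} [LinearOrder ι] (A : ι → Set α) :
    Pairwise (Function.onFun Disjoint fun i => A i \ ⋃ k ∈ Iio i, A k) := by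
  refine (pairwise_disjoint_on _).2 fun i j hij => disjoint_left.2 fun a hi hj => ?_
  exact hj.2 (mem_biUnion hij hi.1)

theorem iUnion_sdiff_biUnion_Iio {α ι : Type*} [Preorder ι] [WellFoundedLT ι] (A : ι → Set α) :
    ⋃ i, (A i \ ⋃ k ∈ Iio i, A k) = ⋃ i, A i := by
  refine (iUnion_mono fun i => sdiff_subset).antisymm (iUnion_subset fun j a ha => ?_)
  obtain ⟨i, hi, hmin⟩ := wellFounded_lt.has_min {i | a ∈ A i} ⟨j, ha⟩
  refine mem_iUnion.2 ⟨i, hi, fun hlt => ?_⟩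
  obtain ⟨k, hki, hk⟩ := mem_iUnion₂.1 hlt
  exact hmin k hk hki

variable {α ι : Type v}

theorem mk_biUnion_Iio_le [Preorder ι] {A : ι → Set α} {i : ι}
    (hA : ∀ k < i, #(A k) ≤ max ℵ₀ #(Iio k)) :
    #(⋃ k ∈ Iio i, A k) ≤ max ℵ₀ #(Iio i) := by
  rw [biUnion_eq_iUnion]
  refine mk_iUnion_le_of_aleph0_le (le_max_left _ _) (lift_le.2 (le_max_right _ _)) fun k => ?_
  exact (hA k k.2).trans (max_le_max le_rfl (mk_le_mk_of_subset (Iio_subset_Iio k.2.le)))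

theorem exists_monotone_filtration [PartialOrder ι] [WellFoundedLT ι] (f : ι → α)
    {P : Set α → Set α → Prop}
    (hP : ∀ U a, ∃ T, insert a U ⊆ T ∧ P U T ∧ #T ≤ max ℵ₀ #U) :
    ∃ A : ι → Set α, Monotone A ∧ (∀ i, f i ∈ A i) ∧ (∀ i, P (⋃ k ∈ Iio i, A k) (A i)) ∧
      ∀ i, #(A i) ≤ max ℵ₀ #(Iio i) := by
  choose step hsub hstep hcard using hP
  let A : ι → Set α := WellFoundedLT.fix fun i rec => step (⋃ k, ⋃ hk : k ∈ Iio i, rec k hk) (f i)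
  have hA : ∀ i, A i = step (⋃ k ∈ Iio i, A k) (f i) := fun i => WellFoundedLT.fix_eq _ i
  have hinsert : ∀ i, insert (f i) (⋃ k ∈ Iio i, A k) ⊆ A i := fun i => by
    rw [hA i]
    exact hsub _ _
  refine ⟨A, fun k i hki => ?_, fun i => hinsert i (mem_insert _ _), fun i => ?_, fun i => ?_⟩
  · rcases hki.eq_or_lt with rfl | hki
    · exact subset_rfl
    · have hk : k ∈ Iio i := hki
      exact (subset_biUnion_of_mem hk).trans ((subset_insert _ _).trans (hinsert i))
  · rw [hA i]
    exact hstep _ _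
  · induction i using WellFoundedLT.induction with
    | _ i ih =>
      rw [hA i]
      exact (hcard _ _).trans (max_le (le_max_left _ _) (mk_biUnion_Iio_le ih))

-- The elements of an uncountable `C` are labelled by an embedding of `C` into the least initial
-- segment that is large enough.
theorem exists_countable_labelling [LinearOrder ι] [WellFoundedLT ι] {f : ι → α}
    (hf : Function.Injective f) (C : Set α) :
    ∃ c : α → Set α, (∀ a, (c a).Countable) ∧
      ∀ (U : Set α) (i : ι), U.Nonempty → f '' Iio i ⊆ U → #C ≤ max ℵ₀ #(Iio i) →
        C ⊆ ⋃ a ∈ U, c a := by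
  by_cases hC : C.Countable
  · refine ⟨fun _ => C, fun _ => hC, fun U _ ⟨a, ha⟩ _ _ => ?_⟩
    exact subset_biUnion_of_mem (u := fun _ => C) ha
  have hle : ∀ i : ι, #C ≤ max ℵ₀ #(Iio i) → #C ≤ #(Iio i) := fun i h =>
    (le_max_iff.1 h).resolve_left fun h => hC (le_aleph0_iff_set_countable.1 h)
  by_cases hex : ∃ i : ι, #C ≤ #(Iio i)
  · obtain ⟨i₀, ⟨g⟩, hmin⟩ := wellFounded_lt.has_min {i : ι | #C ≤ #(Iio i)} hex
    refine ⟨fun a => {b | ∃ h : b ∈ C, f (g ⟨b, h⟩) = a}, fun a => ?_, fun U i _ hU hi b hb => ?_⟩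
    · refine Subsingleton.countable ?_
      rintro b ⟨hb, rfl⟩ b' ⟨hb', h⟩
      exact congrArg Subtype.val (g.injective (Subtype.val_injective (hf h))).symm
    · have hlt : (g ⟨b, hb⟩ : ι) < i := (g ⟨b, hb⟩).2.trans_le (not_lt.1 (hmin i (hle i hi)))
      exact mem_biUnion (hU (mem_image_of_mem f hlt)) ⟨hb, rfl⟩
  · exact ⟨fun _ => ∅, fun _ => countable_empty, fun U i _ _ hi => absurd ⟨i, hle i hi⟩ hex⟩

end Cardinality

namespace Multigraph

open Cardinal Set

variable {V : Type u} {E : Type v} {G : Multigraph V E}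

theorem exists_inc_eq (G : Multigraph V E) (e : E) : ∃ x y, G.inc e = s(x, y) :=
  (G.inc e).ind (f := fun z => ∃ x y, z = s(x, y)) fun x y => ⟨x, y, rfl⟩

theorem mem_cut_iff {e : E} {x y : V} (he : G.inc e = s(x, y)) (X : Set V) :
    e ∈ G.cut X ↔ ¬ (x ∈ X ↔ y ∈ X) := by
  constructor
  · rintro ⟨a, b, hab, ha, hb⟩
    rcases Sym2.eq_iff.1 (he.symm.trans hab) with ⟨rfl, rfl⟩ | ⟨rfl, rfl⟩ <;> tauto
  · intro h
    by_cases hx : x ∈ X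
    · exact ⟨x, y, he, hx, by tauto⟩
    · exact ⟨y, x, he.trans Sym2.eq_swap, by tauto, hx⟩

/-- The set `V(S)` of vertices incident with an edge of `S`. -/
def verts (G : Multigraph V E) (S : Set E) : Set V := {v | ∃ e ∈ S, v ∈ G.inc e}

theorem mem_verts {S : Set E} {e : E} (heS : e ∈ S) {x y : V} (he : G.inc e = s(x, y)) :
    x ∈ G.verts S ∧ y ∈ G.verts S :=
  ⟨⟨e, heS, he ▸ Sym2.mem_mk_left x y⟩, ⟨e, heS, he ▸ Sym2.mem_mk_right x y⟩⟩

theorem finite_verts {S : Set E} (hS : S.Finite) : (G.verts S).Finite := by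
  have hverts : G.verts S = ⋃ e ∈ S, {v | v ∈ G.inc e} := by
    ext v
    simp only [verts, mem_iUnion₂, mem_ofPred_eq, exists_prop]
  rw [hverts]
  refine hS.biUnion fun e _ => ?_
  obtain ⟨x, y, he⟩ := G.exists_inc_eq e
  exact (toFinite {x, y}).subset fun v hv => Sym2.mem_iff.1 (he ▸ hv)

/-! ### Connectivity in a set of edges -/

/-- The simple graph underlying the spanning subgraph with edge set `S`; its reachability relation
is the connectivity of that subgraph. -/
def toSimpleGraph (G : Multigraph V E) (S : Set E) : SimpleGraph V where
  Adj x y := ∃ e ∈ S, G.inc e = s(x, y)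
  symm := ⟨fun _ _ ⟨e, heS, he⟩ => ⟨e, heS, he.trans Sym2.eq_swap⟩⟩
  loopless := ⟨fun _ ⟨e, _, he⟩ => G.not_isDiag e (he ▸ Sym2.mk_isDiag_iff.2 rfl)⟩

theorem toSimpleGraph_mono {S T : Set E} (h : S ⊆ T) : G.toSimpleGraph S ≤ G.toSimpleGraph T :=
  fun _ _ ⟨e, heS, he⟩ => ⟨e, h heS, he⟩

theorem reachable_iff_of_mem {S : Set E} {e : E} (heS : e ∈ S) {x y : V}
    (he : G.inc e = s(x, y)) (w : V) :
    (G.toSimpleGraph S).Reachable w x ↔ (G.toSimpleGraph S).Reachable w y := by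
  have hadj : (G.toSimpleGraph S).Adj x y := ⟨e, heS, he⟩
  exact ⟨fun h => h.trans hadj.reachable, fun h => h.trans hadj.symm.reachable⟩

theorem nonempty_cut_inter_of_reachable {S : Set E} {x y : V}
    (h : (G.toSimpleGraph S).Reachable x y) {X : Set V} (hx : x ∈ X) (hy : y ∉ X) :
    (G.cut X ∩ S).Nonempty := by
  obtain ⟨p⟩ := h
  obtain ⟨⟨⟨a, b⟩, e, heS, he⟩, -, ha, hb⟩ := p.exists_boundary_dart X hx hy
  exact ⟨e, ⟨a, b, he, ha, hb⟩, heS⟩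

namespace Walk

theorem reachable {x y : V} (p : G.Walk x y) :
    (G.toSimpleGraph {e | e ∈ p.edges}).Reachable x y := by
  induction p with
  | nil v => exact .refl v
  | @cons x z y e he p ih =>
    have hadj : (G.toSimpleGraph {f | f ∈ (cons e he p).edges}).Adj x z :=
      ⟨e, List.mem_cons_self, he⟩
    exact hadj.reachable.trans (ih.mono (toSimpleGraph_mono fun _ => List.mem_cons_of_mem e))

theorem mem_support_of_mem_edges {x y z : V} {p : G.Walk x y} {e : E} (he : e ∈ p.edges)
    (hz : z ∈ G.inc e) : z ∈ p.support := by
  induction p with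
  | nil v => exact absurd he List.not_mem_nil
  | @cons a b c f hf p ih =>
    rcases List.mem_cons.1 he with rfl | he
    · rcases Sym2.mem_iff.1 (hf ▸ hz) with rfl | rfl
      · exact List.mem_cons_self
      · exact List.mem_cons_of_mem _ (by cases p <;> exact List.mem_cons_self)
    · exact List.mem_cons_of_mem _ (ih he)

theorem edges_nodup_of_support_nodup {x y : V} {p : G.Walk x y} (hp : p.support.Nodup) :
    p.edges.Nodup := by
  induction p with
  | nil v => exact List.nodup_nil
  | @cons a b c e he p ih =>
    obtain ⟨ha, hp⟩ := List.nodup_cons.1 hp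
    refine List.nodup_cons.2 ⟨fun hep => ha ?_, ih hp⟩
    exact mem_support_of_mem_edges hep (he ▸ Sym2.mem_mk_left a b)

theorem even_countP_cut_iff {x y : V} (p : G.Walk x y) (X : Set V)
    [DecidablePred (· ∈ G.cut X)] : Even (p.edges.countP (· ∈ G.cut X)) ↔ (x ∈ X ↔ y ∈ X) := by
  induction p with
  | nil v => simp [edges]
  | @cons x z y e he p ih =>
    have hcut := mem_cut_iff he X
    by_cases h : e ∈ G.cut X
    · simp only [edges, List.countP_cons, h, decide_true, if_true, Nat.even_add_one, ih]
      tauto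
    · simp only [edges, List.countP_cons, h, decide_false, Bool.false_eq_true, if_false, add_zero,
        ih]
      tauto

end Walk

theorem exists_walk_of_toSimpleGraph_walk {S : Set E} {x y : V}
    (p : (G.toSimpleGraph S).Walk x y) :
    ∃ q : G.Walk x y, q.support = p.support ∧ ∀ e ∈ q.edges, e ∈ S := by
  induction p with
  | nil => exact ⟨.nil _, rfl, by simp [Walk.edges]⟩
  | cons hadj p ih =>
    obtain ⟨q, hsupp, hq⟩ := ih
    obtain ⟨e, heS, he⟩ := hadj
    exact ⟨.cons e he q, congrArg (List.cons _) hsupp, List.forall_mem_cons.2 ⟨heS, hq⟩⟩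

theorem exists_path_of_reachable {S : Set E} {x y : V}
    (h : (G.toSimpleGraph S).Reachable x y) :
    ∃ p : G.Walk x y, p.support.Nodup ∧ ∀ e ∈ p.edges, e ∈ S := by
  obtain ⟨p, hp⟩ := h.exists_isPath
  obtain ⟨q, hsupp, hq⟩ := exists_walk_of_toSimpleGraph_walk p
  exact ⟨q, hsupp ▸ hp.support_nodup, hq⟩

theorem exists_countable_connector {S : Set E} {x y : V}
    (h : (G.toSimpleGraph S).Reachable x y) :
    ∃ Q ⊆ S, Q.Countable ∧ (G.toSimpleGraph Q).Reachable x y := by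
  obtain ⟨p, -, hp⟩ := exists_path_of_reachable h
  exact ⟨{e | e ∈ p.edges}, hp, (List.finite_toSet p.edges).countable, p.reachable⟩

/-! ### Sets of edges whose finite cuts are even -/

/-- Every finite cut of the spanning subgraph with edge set `S` has even size. -/
def FiniteCutsEven (G : Multigraph V E) (S : Set E) : Prop :=
  ∀ X : Set V, (G.cut X ∩ S).Finite → Even (G.cut X ∩ S).ncard

theorem FiniteCutsEven.of_cuts {R D : Set E} (hR : G.FiniteCutsEven R)
    (h : ∀ X, (G.cut X ∩ D).Finite → ∃ Y, G.cut Y ∩ R = G.cut X ∩ D) : G.FiniteCutsEven D := by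
  intro X hfin
  obtain ⟨Y, hY⟩ := h X hfin
  exact hY ▸ hR Y (hY ▸ hfin)

theorem exists_cut_inter_eq_of_reachable_imp {R D F : Set E} {X : Set V} (hDR : D ⊆ R)
    (hF : F = G.cut X ∩ D)
    (h : ∀ x ∈ G.verts D, ∀ y ∈ G.verts D,
      (G.toSimpleGraph (R \ F)).Reachable x y → (G.toSimpleGraph (D \ F)).Reachable x y) :
    ∃ Y, G.cut Y ∩ R = F := by
  refine ⟨{v | ∃ w ∈ X ∩ G.verts D, (G.toSimpleGraph (R \ F)).Reachable w v}, ?_⟩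
  apply Subset.antisymm
  · rintro e ⟨⟨x, y, he, ⟨w, hw, hwx⟩, hy⟩, heR⟩
    by_contra heF
    exact hy ⟨w, hw, (reachable_iff_of_mem (S := R \ F) ⟨heR, heF⟩ he w).1 hwx⟩
  · intro e heF
    obtain ⟨⟨x, y, he, hx, hy⟩, heD⟩ := hF ▸ heF
    obtain ⟨hxD, hyD⟩ := mem_verts heD he
    refine ⟨⟨x, y, he, ⟨x, ⟨hx, hxD⟩, .refl x⟩, ?_⟩, hDR heD⟩
    rintro ⟨w, ⟨hwX, hwD⟩, hwy⟩
    obtain ⟨f, hfX, hfD, hfF⟩ := nonempty_cut_inter_of_reachable (h w hwD y hyD hwy) hwX hy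
    exact hfF (hF.symm.subset ⟨hfX, hfD⟩)

theorem FiniteCutsEven.diff_of_reachable_imp {S U : Set E} (hS : G.FiniteCutsEven S)
    (h : ∀ x ∈ G.verts U, ∀ y ∈ G.verts U, (G.toSimpleGraph (S \ U)).Reachable x y →
      ∀ F : Set E, F.Finite → (G.toSimpleGraph (S \ (U ∪ F))).Reachable x y) :
    G.FiniteCutsEven (S \ U) := by
  refine hS.of_cuts fun X hfin => ?_
  let Z : Set V := {v | ∃ w ∈ G.verts U ∩ X, (G.toSimpleGraph (S \ U)).Reachable w v}
  have hZ : ∀ v ∈ G.verts U, v ∈ Z ↔ v ∈ X := by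
    refine fun v hv => ⟨fun ⟨w, ⟨hwU, hwX⟩, hwv⟩ => ?_, fun hvX => ⟨v, ⟨hv, hvX⟩, .refl v⟩⟩
    by_contra hvX
    obtain ⟨f, hfX, hfS, hf⟩ :=
      nonempty_cut_inter_of_reachable (h w hwU v hv hwv _ hfin) hwX hvX
    exact hf (Or.inr ⟨hfX, hfS, fun hfU => hf (Or.inl hfU)⟩)
  refine ⟨symmDiff X Z, ?_⟩
  ext e
  obtain ⟨x, y, he⟩ := G.exists_inc_eq e
  simp only [mem_inter_iff, mem_sdiff, mem_cut_iff he, mem_symmDiff]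
  by_cases heU : e ∈ U
  · have hx := hZ x (mem_verts heU he).1
    have hy := hZ y (mem_verts heU he).2
    tauto
  · by_cases heS : e ∈ S
    · have hxy : x ∈ Z ↔ y ∈ Z := exists_congr fun w =>
        and_congr_right fun _ => reachable_iff_of_mem (S := S \ U) ⟨heS, heU⟩ he w
      tauto
    · tauto

/-! ### Decompositions into cycles -/

/-- The edge set of a cycle. -/
def Cycle.edgeSet (c : G.Cycle) : Set E := {e | e ∈ c.walk.edges}

theorem Cycle.even_ncard_cut_inter (c : G.Cycle) (X : Set V) :
    Even (G.cut X ∩ c.edgeSet).ncard := by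
  classical
  have hcut : G.cut X ∩ c.edgeSet =
      ((c.walk.edges.filter (· ∈ G.cut X)).toFinset : Set E) := by
    ext e
    simp [edgeSet, and_comm]
  rw [hcut, ncard_coe_finset, List.toFinset_card_of_nodup (c.edges_nodup.filter _),
    ← List.countP_eq_length_filter]
  exact (c.walk.even_countP_cut_iff X).2 Iff.rfl

theorem IsEulerian.even_ncard_cut (hG : G.IsEulerian) {X : Set V} (hX : (G.cut X).Finite) :
    Even (G.cut X).ncard := by
  classical
  obtain ⟨𝒞, hdisj, hcover⟩ := hG
  choose c hc hec using hcover
  rw [ncard_eq_toFinset_card _ hX, Finset.card_eq_sum_card_image c]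
  refine Finset.even_sum _ fun d hd => ?_
  obtain ⟨e, -, rfl⟩ := Finset.mem_image.1 hd
  have hfiber : ∀ e', c e' = c e ↔ e' ∈ (c e).edgeSet := fun e' =>
    ⟨fun h => h ▸ hec e', fun h => by_contra fun hne => hdisj _ (hc e') _ (hc e) hne e' (hec e') h⟩
  have hcut : ((hX.toFinset.filter fun e' => c e' = c e : Finset E) : Set E) =
      G.cut X ∩ (c e).edgeSet := by
    ext e'
    simp only [Finset.coe_filter, Finite.mem_toFinset, hfiber]
    rfl
  rw [← ncard_coe_finset, hcut]
  exact (c e).even_ncard_cut_inter X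

theorem FiniteCutsEven.reachable_diff_singleton {S : Set E} (hS : G.FiniteCutsEven S) {e : E}
    (heS : e ∈ S) {x y : V} (he : G.inc e = s(x, y)) :
    (G.toSimpleGraph (S \ {e})).Reachable x y := by
  by_contra hxy
  have hcut : G.cut {v | (G.toSimpleGraph (S \ {e})).Reachable x v} ∩ S = {e} := by
    apply Subset.antisymm
    · rintro f ⟨⟨a, b, hf, ha, hb⟩, hfS⟩
      by_contra hfe
      exact hb ((reachable_iff_of_mem (S := S \ {e}) ⟨hfS, hfe⟩ hf x).1 ha)
    · rintro _ rfl
      exact ⟨⟨x, y, he, .refl x, hxy⟩, heS⟩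
  have heven := hS _ (hcut ▸ finite_singleton e)
  rw [hcut, ncard_singleton] at heven
  exact Nat.not_even_one heven

theorem FiniteCutsEven.exists_cycle {S : Set E} (hS : G.FiniteCutsEven S) {e : E} (heS : e ∈ S) :
    ∃ c : G.Cycle, c.edgeSet ⊆ S ∧ e ∈ c.edgeSet := by
  obtain ⟨x, y, he⟩ := G.exists_inc_eq e
  obtain ⟨p, hp, hpS⟩ := exists_path_of_reachable (hS.reachable_diff_singleton heS he).symm
  let c : G.Cycle :=
    { base := x
      walk := .cons e he p
      edges_ne_nil := List.cons_ne_nil _ _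
      edges_nodup :=
        List.nodup_cons.2 ⟨fun h => (hpS e h).2 rfl, Walk.edges_nodup_of_support_nodup hp⟩
      support_tail_nodup := hp }
  exact ⟨c, List.forall_mem_cons.2 ⟨heS, fun f hf => (hpS f hf).1⟩, List.mem_cons_self⟩

theorem FiniteCutsEven.diff_cycle {S : Set E} (hS : G.FiniteCutsEven S) {c : G.Cycle}
    (hc : c.edgeSet ⊆ S) : G.FiniteCutsEven (S \ c.edgeSet) := by
  intro X hfin
  have hunion : (G.cut X ∩ (S \ c.edgeSet)) ∪ (G.cut X ∩ c.edgeSet) = G.cut X ∩ S := by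
    rw [← inter_union_distrib_left, sdiff_union_of_subset hc]
  have hdisj : Disjoint (G.cut X ∩ (S \ c.edgeSet)) (G.cut X ∩ c.edgeSet) :=
    disjoint_sdiff_left.mono inter_subset_right inter_subset_right
  have hcfin : (G.cut X ∩ c.edgeSet).Finite := (List.finite_toSet _).subset inter_subset_right
  have heven := hS X (hunion ▸ hfin.union hcfin)
  rw [← hunion, ncard_union_eq hdisj hfin hcfin, Nat.even_add] at heven
  exact heven.2 (c.even_ncard_cut_inter X)

/-- The edge set `S` can be partitioned into edge sets of cycles. -/
def IsCycleDecomposable (G : Multigraph V E) (S : Set E) : Prop :=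
  ∃ 𝒞 : Set G.Cycle, 𝒞.PairwiseDisjoint Cycle.edgeSet ∧ ⋃ c ∈ 𝒞, c.edgeSet = S

theorem isCycleDecomposable_univ : G.IsCycleDecomposable univ ↔ G.IsEulerian := by
  refine exists_congr fun 𝒞 => and_congr ?_ ?_
  · refine forall₂_congr fun c _ => forall₂_congr fun d _ => forall_congr' fun _ => ?_
    exact disjoint_left
  · simp only [eq_univ_iff_forall, mem_iUnion₂, exists_prop]
    rfl

theorem isCycleDecomposable_empty : G.IsCycleDecomposable ∅ :=
  ⟨∅, pairwiseDisjoint_empty, biUnion_empty _⟩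

theorem Cycle.isCycleDecomposable_edgeSet (c : G.Cycle) : G.IsCycleDecomposable c.edgeSet :=
  ⟨{c}, pairwiseDisjoint_singleton _ _, biUnion_singleton _ _⟩

theorem IsCycleDecomposable.iUnion {ι : Type*} {D : ι → Set E}
    (hdisj : Pairwise (Function.onFun Disjoint D)) (hD : ∀ i, G.IsCycleDecomposable (D i)) :
    G.IsCycleDecomposable (⋃ i, D i) := by
  choose 𝒞 h𝒞 hcover using hD
  have hsub : ∀ i, ∀ c ∈ 𝒞 i, c.edgeSet ⊆ D i := fun i c hc =>
    hcover i ▸ subset_biUnion_of_mem (u := Cycle.edgeSet) hc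
  refine ⟨⋃ i, 𝒞 i, fun c hc d hd hcd => ?_, ?_⟩
  · obtain ⟨i, hi⟩ := mem_iUnion.1 hc
    obtain ⟨j, hj⟩ := mem_iUnion.1 hd
    rcases eq_or_ne i j with rfl | hij
    · exact h𝒞 i hi hj hcd
    · exact (hdisj hij).mono (hsub i c hi) (hsub j d hj)
  · rw [biUnion_iUnion]
    exact iUnion_congr hcover

theorem FiniteCutsEven.exists_remainder {R : Set E} (hR : G.FiniteCutsEven R) (e : E) :
    ∃ R' ⊆ R, G.FiniteCutsEven R' ∧ e ∉ R' ∧ G.IsCycleDecomposable (R \ R') := by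
  by_cases he : e ∈ R
  · obtain ⟨c, hcR, hec⟩ := hR.exists_cycle he
    refine ⟨R \ c.edgeSet, sdiff_subset, hR.diff_cycle hcR, fun h => h.2 hec, ?_⟩
    rw [sdiff_sdiff_cancel_left hcR]
    exact c.isCycleDecomposable_edgeSet
  · exact ⟨R, subset_rfl, hR, he, by simpa using isCycleDecomposable_empty⟩

theorem FiniteCutsEven.isCycleDecomposable_of_countable {S : Set E} (hS : G.FiniteCutsEven S)
    (hcount : S.Countable) : G.IsCycleDecomposable S := by
  rcases S.eq_empty_or_nonempty with rfl | hne
  · exact isCycleDecomposable_empty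
  obtain ⟨f, hf⟩ := hcount.exists_eq_range hne
  choose next hsub heven hnot hdec using fun R : {R // G.FiniteCutsEven R} => R.2.exists_remainder
  let R : ℕ → {R // G.FiniteCutsEven R} :=
    fun n => Nat.rec ⟨S, hS⟩ (fun n R => ⟨next R (f n), heven R (f n)⟩) n
  have hanti : Antitone fun n => (R n).1 := antitone_nat_of_succ_le fun n => hsub (R n) (f n)
  have hcover : ⋃ n, (R n).1 \ (R (n + 1)).1 = S := by
    refine Subset.antisymm (iUnion_subset fun n => ?_) fun e he => ?_
    · exact sdiff_subset.trans (hanti n.zero_le)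
    obtain ⟨m, rfl⟩ := hf ▸ he
    by_contra hlayer
    have hmem : ∀ n, f m ∈ (R n).1 := by
      intro n
      induction n with
      | zero => exact he
      | succ n ih => exact by_contra fun h => hlayer (mem_iUnion.2 ⟨n, ih, h⟩)
    exact hnot (R m) (f m) (hmem (m + 1))
  rw [← hcover]
  refine .iUnion ((pairwise_disjoint_on _).2 fun m n hmn => ?_) fun n => hdec (R n) (f n)
  exact disjoint_left.2 fun e hm hn => hm.2 (hanti (Nat.succ_le_of_lt hmn) hn.1)

/-! ### Closed sets of edges -/

/-- `T` is closed under the operator `κ`, which assigns sets of edges to a finite set of edges and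
two vertices: `T` contains `κ F x y` whenever it contains `F` and covers `x` and `y`. -/
def IsClosedUnder (G : Multigraph V E) (κ : Finset E → V → V → Set E) (T : Set E) : Prop :=
  ∀ F : Finset E, (F : Set E) ⊆ T → ∀ x ∈ G.verts T, ∀ y ∈ G.verts T, κ F x y ⊆ T

theorem IsClosedUnder.mono {κ κ' : Finset E → V → V → Set E} {T : Set E}
    (hT : G.IsClosedUnder κ' T) (hκ : κ ≤ κ') : G.IsClosedUnder κ T :=
  fun F hF x hx y hy => (hκ F x y).trans (hT F hF x hx y hy)

theorem exists_isClosedUnder (G : Multigraph V E) {κ : Finset E → V → V → Set E}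
    (hκ : ∀ F x y, (κ F x y).Countable) (S : Set E) :
    ∃ T, S ⊆ T ∧ G.IsClosedUnder κ T ∧ #T ≤ max ℵ₀ #S := by
  classical
  let φ : Finset E → Set E := fun F =>
    ⋃ F' ∈ F.powerset, ⋃ x ∈ G.verts (F : Set E), ⋃ y ∈ G.verts (F : Set E), κ F' x y
  have hverts : ∀ F : Finset E, (G.verts (F : Set E)).Countable := fun F =>
    (finite_verts F.finite_toSet).countable
  have hφ : ∀ F, (φ F).Countable := fun F =>
    F.powerset.countable_toSet.biUnion fun F' _ => (hverts F).biUnion fun x _ =>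
      (hverts F).biUnion fun y _ => hκ F' x y
  obtain ⟨T, hST, hT, hcard⟩ := exists_superset_closed_mk_le φ hφ S
  refine ⟨T, hST, ?_, hcard⟩
  rintro F hF x ⟨e₁, he₁, hx⟩ y ⟨e₂, he₂, hy⟩ a ha
  have hF' : ((insert e₁ (insert e₂ F) : Finset E) : Set E) ⊆ T := by
    simp only [Finset.coe_insert, insert_subset_iff]
    exact ⟨he₁, he₂, hF⟩
  refine hT _ hF' ?_
  simp only [φ, mem_iUnion₂]
  exact ⟨F, Finset.mem_powerset.2 ((Finset.subset_insert _ _).trans (Finset.subset_insert _ _)),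
    x, ⟨e₁, by simp, hx⟩, y, ⟨e₂, by simp, hy⟩, ha⟩

theorem IsClosedUnder.biUnion {ι : Type*} [LinearOrder ι] {A : ι → Set E} (hA : Monotone A)
    {κ : Finset E → V → V → Set E} (hκ : ∀ i, G.IsClosedUnder κ (A i)) (s : Set ι) :
    G.IsClosedUnder κ (⋃ i ∈ s, A i) := by
  classical
  rintro F hF x ⟨e₁, he₁, hx⟩ y ⟨e₂, he₂, hy⟩
  have hF' : ((insert e₁ (insert e₂ F) : Finset E) : Set E) ⊆ ⋃ i ∈ s, A i := by
    simp only [Finset.coe_insert, insert_subset_iff]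
    exact ⟨he₁, he₂, hF⟩
  have hdir : DirectedOn (fun i j => A i ⊆ A j) s := fun i hi j hj =>
    (le_total i j).elim (fun h => ⟨j, hj, hA h, subset_rfl⟩) fun h => ⟨i, hi, subset_rfl, hA h⟩
  obtain ⟨i, his, hi⟩ := hdir.exists_mem_subset_of_finset_subset_biUnion
    (nonempty_biUnion.1 ⟨e₁, he₁⟩ |>.imp fun _ h => h.1) hF'
  simp only [Finset.coe_insert, insert_subset_iff] at hi
  exact (hκ i F hi.2.2 x ⟨e₁, hi.1, hx⟩ y ⟨e₂, hi.2.1, hy⟩).trans (subset_biUnion_of_mem his)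

theorem exists_operator_finiteCutsEven_inter (G : Multigraph V E) (R : Set E) :
    ∃ κ : Finset E → V → V → Set E, (∀ F x y, (κ F x y).Countable) ∧
      ∀ A, G.IsClosedUnder κ A → G.FiniteCutsEven R → G.FiniteCutsEven (R ∩ A) := by
  have hconn : ∀ (F : Finset E) (x y : V), ∃ Q ⊆ R \ F, Q.Countable ∧
      ((G.toSimpleGraph (R \ F)).Reachable x y → (G.toSimpleGraph Q).Reachable x y) := by
    intro F x y
    by_cases h : (G.toSimpleGraph (R \ F)).Reachable x y
    · obtain ⟨Q, hQ, hcount, hreach⟩ := exists_countable_connector h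
      exact ⟨Q, hQ, hcount, fun _ => hreach⟩
    · exact ⟨∅, empty_subset _, countable_empty, fun h' => absurd h' h⟩
  choose κ hκR hκcount hκ using hconn
  refine ⟨κ, hκcount, fun A hA hR => hR.of_cuts fun X hfin => ?_⟩
  obtain ⟨F, hF⟩ := hfin.exists_finset_coe
  rw [← hF]
  refine exists_cut_inter_eq_of_reachable_imp inter_subset_left hF fun x hx y hy hxy => ?_
  have hverts : G.verts (R ∩ A) ⊆ G.verts A := fun v ⟨e, he, hv⟩ => ⟨e, he.2, hv⟩
  have hFA : (F : Set E) ⊆ A := hF ▸ fun e he => he.2.2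
  have hκA := hA F hFA x (hverts hx) y (hverts hy)
  refine (hκ F x y hxy).mono (toSimpleGraph_mono fun e he => ?_)
  exact ⟨⟨(hκR F x y he).1, hκA he⟩, (hκR F x y he).2⟩

theorem exists_minimum_separator (G : Multigraph V E) (S : Set E) (x y : V) :
    ∃ C : Set E, ∀ B : Set E, ¬ (G.toSimpleGraph (S \ B)).Reachable x y →
      ¬ (G.toSimpleGraph (S \ C)).Reachable x y ∧ #C ≤ #B := by
  by_cases h : ∃ B : Set E, ¬ (G.toSimpleGraph (S \ B)).Reachable x y
  · obtain ⟨C, hC, hmin⟩ := (InvImage.wf (fun B : Set E => #B) Cardinal.lt_wf).has_min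
      {B | ¬ (G.toSimpleGraph (S \ B)).Reachable x y} h
    exact ⟨C, fun B hB => ⟨hC, not_lt.1 (hmin B hB)⟩⟩
  · exact ⟨∅, fun B hB => absurd ⟨B, hB⟩ h⟩

theorem exists_operator_finiteCutsEven_diff (G : Multigraph V E) (S : Set E) {ι : Type v}
    [LinearOrder ι] [WellFoundedLT ι] {f : ι → E} (hf : Function.Injective f) :
    ∃ κ : Finset E → V → V → Set E, (∀ F x y, (κ F x y).Countable) ∧
      ∀ U i, G.IsClosedUnder κ U → f '' Iio i ⊆ U → #U ≤ max ℵ₀ #(Iio i) →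
        G.FiniteCutsEven S → G.FiniteCutsEven (S \ U) := by
  choose C hC using G.exists_minimum_separator S
  choose c hcount hc using fun x y => exists_countable_labelling hf (C x y)
  refine ⟨fun F x y => ⋃ e ∈ F, c x y e,
    fun F x y => F.countable_toSet.biUnion fun e _ => hcount x y e, fun U i hU hfU hcard hS => ?_⟩
  refine hS.diff_of_reachable_imp fun x hx y hy hxy F hF => ?_
  by_contra hsep
  obtain ⟨hCsep, hCmin⟩ := hC x y _ hsep
  have hCcard : #(C x y) ≤ max ℵ₀ #(Iio i) :=
    hCmin.trans <| (mk_union_le U F).trans <| add_le_of_le (le_max_left _ _) hcard <|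
      (le_aleph0_iff_set_countable.2 hF.countable).trans (le_max_left _ _)
  have hCU : C x y ⊆ U := by
    obtain ⟨e, he, -⟩ := id hx
    refine (hc x y U i ⟨e, he⟩ hfU hCcard).trans (iUnion₂_subset fun e he => ?_)
    simpa using hU {e} (by simpa using he) x hx y hy
  exact hCsep (hxy.mono (toSimpleGraph_mono (sdiff_subset_sdiff_right hCU)))

/-! ### The decomposition -/

theorem FiniteCutsEven.exists_filtration {S : Set E} (hS : G.FiniteCutsEven S) :
    ∃ A : (#S).ord.ToType → Set E, S ⊆ ⋃ i, A i ∧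
      (∀ i, G.FiniteCutsEven ((S \ ⋃ k ∈ Iio i, A k) ∩ A i)) ∧ ∀ i, #(A i) ≤ max ℵ₀ #(Iio i) := by
  obtain ⟨g⟩ : Nonempty ((#S).ord.ToType ≃ S) := Cardinal.eq.1 (mk_ord_toType _)
  let f : (#S).ord.ToType → E := fun i => g i
  have hf : Function.Injective f := Subtype.val_injective.comp g.injective
  obtain ⟨κ, hκcount, hκ⟩ := G.exists_operator_finiteCutsEven_diff S hf
  choose η hηcount hη using fun U => G.exists_operator_finiteCutsEven_inter (S \ U)
  have hstep : ∀ U e, ∃ T, insert e U ⊆ T ∧ G.IsClosedUnder (κ ⊔ η U) T ∧ #T ≤ max ℵ₀ #U := by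
    intro U e
    obtain ⟨T, hUT, hT, hTcard⟩ := G.exists_isClosedUnder
      (fun F x y => (hκcount F x y).union (hηcount U F x y)) (insert e U)
    have hinsert : #(insert e U : Set E) ≤ max ℵ₀ #U :=
      mk_insert_le.trans <| add_le_of_le (le_max_left _ _) (le_max_right _ _)
        (one_lt_aleph0.le.trans (le_max_left _ _))
    exact ⟨T, hUT, hT, hTcard.trans (max_le (le_max_left _ _) hinsert)⟩
  obtain ⟨A, hmono, hfA, hclosed, hcard⟩ := exists_monotone_filtration f hstep
  refine ⟨A, fun e he => mem_iUnion.2 ⟨g.symm ⟨e, he⟩, ?_⟩, fun i => ?_, hcard⟩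
  · simpa [f] using hfA (g.symm ⟨e, he⟩)
  · have hUclosed : G.IsClosedUnder κ (⋃ k ∈ Iio i, A k) :=
      .biUnion hmono (fun k => (hclosed k).mono le_sup_left) _
    have hfU : f '' Iio i ⊆ ⋃ k ∈ Iio i, A k :=
      image_subset_iff.2 fun k hk => mem_biUnion hk (hfA k)
    exact hη _ _ ((hclosed i).mono le_sup_right)
      (hκ _ i hUclosed hfU (mk_biUnion_Iio_le fun k _ => hcard k) hS)

theorem FiniteCutsEven.exists_layers {S : Set E} (hS : G.FiniteCutsEven S) (hcard : ℵ₀ < #S) :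
    ∃ (ι : Type v) (D : ι → Set E), Pairwise (Function.onFun Disjoint D) ∧ ⋃ i, D i = S ∧
      ∀ i, G.FiniteCutsEven (D i) ∧ #(D i) < #S := by
  obtain ⟨A, hcover, heven, hAcard⟩ := hS.exists_filtration
  refine ⟨_, fun i => (S \ ⋃ k ∈ Iio i, A k) ∩ A i, ?_, ?_, fun i => ⟨heven i, ?_⟩⟩
  · refine (pairwise_disjoint_sdiff_biUnion_Iio A).mono fun i j h => h.mono ?_ ?_ <;>
    exact fun e he => ⟨he.2, he.1.2⟩
  · calc
      ⋃ i, (S \ ⋃ k ∈ Iio i, A k) ∩ A i = S ∩ ⋃ i, (A i \ ⋃ k ∈ Iio i, A k) := by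
        rw [inter_iUnion]
        exact iUnion_congr fun i => by rw [sdiff_inter_right_comm, inter_sdiff_assoc]
      _ = S := by rw [iUnion_sdiff_biUnion_Iio, inter_eq_left.2 hcover]
  · have hIio : #(Iio i) < #S := (mk_Iio_lt i (by simp)).trans_eq (mk_ord_toType _)
    exact (mk_le_mk_of_subset inter_subset_right).trans_lt
      ((hAcard i).trans_lt (max_lt hcard hIio))

theorem FiniteCutsEven.isCycleDecomposable {S : Set E} (hS : G.FiniteCutsEven S) :
    G.IsCycleDecomposable S := by
  induction hμ : #S using WellFoundedLT.induction generalizing S with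
  | _ μ ih =>
    subst hμ
    rcases le_or_gt #S ℵ₀ with hcount | hcard
    · exact hS.isCycleDecomposable_of_countable (le_aleph0_iff_set_countable.1 hcount)
    · obtain ⟨ι, D, hdisj, hcover, hD⟩ := hS.exists_layers hcard
      exact hcover ▸ .iUnion hdisj fun i => ih _ (hD i).2 (hD i).1 rfl

end Multigraph

/-- **Nash-Williams' theorem.** A (possibly infinite) graph is Eulerian, i.e.
its edge set can be partitioned into edge sets of cycles, if and only if it
contains no cut of odd (finite) size. -/
theorem nash_williams_eulerian {V : Type u} {E : Type v} (G : Multigraph V E) :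
    G.IsEulerian ↔ ¬ ∃ X : Set V, (G.cut X).Finite ∧ Odd (G.cut X).ncard := by
  constructor
  · rintro hG ⟨X, hfin, hodd⟩
    exact Nat.not_even_iff_odd.2 hodd (hG.even_ncard_cut hfin)
  · intro hG
    rw [← Multigraph.isCycleDecomposable_univ]
    apply Multigraph.FiniteCutsEven.isCycleDecomposable
    simpa [Multigraph.FiniteCutsEven] using hG
end
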